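/- arXiv:2201.12947 — 11 statements merged into one kernel-verified Lean document; each statement's English description precedes it below -/
import Mathlib

section
/- For every κ ∈ ℝ, every B ≥ 0, and every z with |z| ≤ B, one has log(1 + exp(κz)) ≤ log(1 + exp(κB)) − κ·(B − z)/2. -/
/-!
Factoring `exp (x / 2)` out of `1 + exp x` shows that `log (1 + exp x) - x / 2` equals
`log (2 * cosh (x / 2))`, which is a strictly increasing function of `|x|`.
-/

theorem one_add_exp_eq_exp_half_mul_cosh_half (x : ℝ) :
    1 + Real.exp x = Real.exp (x / 2) * (2 * Real.cosh (x / 2)) :=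
  calc
    1 + Real.exp x = Real.exp (x / 2 + -(x / 2)) + Real.exp (x / 2 + x / 2) := by
      rw [add_neg_cancel, Real.exp_zero, add_halves]
    _ = Real.exp (x / 2) * (Real.exp (x / 2) + Real.exp (-(x / 2))) := by
      rw [Real.exp_add, Real.exp_add]
      ring
    _ = Real.exp (x / 2) * (2 * Real.cosh (x / 2)) := by
      rw [Real.cosh_eq, mul_div_cancel₀ _ two_ne_zero]

theorem log_one_add_exp_eq_half_add_log_cosh_half (x : ℝ) :
    Real.log (1 + Real.exp x) = x / 2 + Real.log (2 * Real.cosh (x / 2)) := by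
  have hcosh : 0 < 2 * Real.cosh (x / 2) := mul_pos two_pos (Real.cosh_pos _)
  rw [one_add_exp_eq_exp_half_mul_cosh_half, Real.log_mul (Real.exp_ne_zero _) hcosh.ne',
    Real.log_exp]

theorem log_two_mul_cosh_le_log_two_mul_cosh {x y : ℝ} :
    Real.log (2 * Real.cosh x) ≤ Real.log (2 * Real.cosh y) ↔ |x| ≤ |y| := by
  have hpos (t : ℝ) : 0 < 2 * Real.cosh t := mul_pos two_pos (Real.cosh_pos t)
  rw [Real.log_le_log_iff (hpos x) (hpos y), mul_le_mul_iff_right₀ two_pos, Real.cosh_le_cosh]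

theorem log_one_add_exp_secant_general {x y : ℝ} :
    Real.log (1 + Real.exp x) ≤ Real.log (1 + Real.exp y) - (y - x) / 2 ↔ |x| ≤ |y| :=
  calc
    Real.log (1 + Real.exp x) ≤ Real.log (1 + Real.exp y) - (y - x) / 2
        ↔ Real.log (2 * Real.cosh (x / 2)) ≤ Real.log (2 * Real.cosh (y / 2)) := by
      rw [log_one_add_exp_eq_half_add_log_cosh_half x, log_one_add_exp_eq_half_add_log_cosh_half y]
      constructor <;> intro h <;> linarith
    _ ↔ |x / 2| ≤ |y / 2| := log_two_mul_cosh_le_log_two_mul_cosh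
    _ ↔ |x| ≤ |y| := by
      rw [abs_div, abs_div, div_le_div_iff_of_pos_right (abs_pos.2 two_ne_zero)]

/-- For every `κ ∈ ℝ`, `B ≥ 0` and `|z| ≤ B`,
`log(1 + exp(κz)) ≤ log(1 + exp(κB)) − κ·(B − z)/2`. -/
theorem log_one_add_exp_secant (κ B z : ℝ) (hB : 0 ≤ B) (hz : |z| ≤ B) :
    Real.log (1 + Real.exp (κ * z)) ≤
      Real.log (1 + Real.exp (κ * B)) - κ * (B - z) / 2 := by
  rw [mul_sub, log_one_add_exp_secant_general, abs_mul, abs_mul]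
  exact mul_le_mul_of_nonneg_left (hz.trans (le_abs_self B)) (abs_nonneg κ)
end

section
/- Fix B > 0, α ∈ ℝ, and θ, z ∈ [−B, B]. Define ϑ(z) := (z − θ)/(B + θ) if z < θ, ϑ(z) := 0 if z = θ, and ϑ(z) := (z − θ)/(B − θ) if z > θ. Then log(1 + exp(αz)) ≤ log((1 + exp(Bα))/(1 + exp(θα)))·|ϑ(z)| − Bα·max{0, −ϑ(z)} + log(1 + exp(θα)). -/
/-!
`ϑ(z)` is a signed barycentric coordinate: `z = (1 - |ϑ|) θ + ϑ⁺ B + ϑ⁻ (-B)` with `|ϑ| ≤ 1`.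
Jensen's inequality at the three nodes `θ`, `B`, `-B` therefore bounds every convex function on
`[-B, B]`. For `f x = log (1 + exp (α x))`, whose derivative is a rescaled sigmoid, the value at
`-B` is eliminated by `f B - f (-B) = B α`, and `ϑ⁺` by `ϑ⁺ + ϑ⁻ = |ϑ|`.
-/

/-- The piecewise function `ϑ` from Lemma on generalized secant bounds. -/
noncomputable def vartheta (B θ z : ℝ) : ℝ :=
  if z < θ then (z - θ) / (B + θ)
  else if z = θ then 0
  else (z - θ) / (B - θ)

section Vartheta

variable {B θ z : ℝ}

lemma vartheta_of_lt (h : z < θ) : vartheta B θ z = (z - θ) / (B + θ) := if_pos h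

@[simp]
lemma vartheta_self : vartheta B θ θ = 0 := by
  simp only [vartheta, lt_irrefl, if_true, if_false]

lemma vartheta_of_gt (h : θ < z) : vartheta B θ z = (z - θ) / (B - θ) := by
  rw [vartheta, if_neg h.not_gt, if_neg h.ne']

lemma abs_vartheta_le_one (hz : z ∈ Set.Icc (-B) B) : |vartheta B θ z| ≤ 1 := by
  obtain ⟨hBz, hzB⟩ := hz
  rcases lt_trichotomy z θ with h | rfl | h
  · have hpos : 0 < B + θ := by linarith
    rw [vartheta_of_lt h, abs_div, abs_of_neg (sub_neg.2 h), abs_of_pos hpos, div_le_one hpos]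
    linarith
  · simp
  · have hpos : 0 < B - θ := by linarith
    rw [vartheta_of_gt h, abs_div, abs_of_pos (sub_pos.2 h), abs_of_pos hpos, div_le_one hpos]
    linarith

lemma vartheta_barycentric (hz : z ∈ Set.Icc (-B) B) :
    (1 - |vartheta B θ z|) * θ + (vartheta B θ z)⁺ * B + (vartheta B θ z)⁻ * (-B) = z := by
  obtain ⟨hBz, hzB⟩ := hz
  rcases lt_trichotomy z θ with h | rfl | h
  · have hpos : 0 < B + θ := by linarith
    have hnonpos : (z - θ) / (B + θ) ≤ 0 := div_nonpos_of_nonpos_of_nonneg (by linarith) hpos.le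
    rw [vartheta_of_lt h, abs_of_nonpos hnonpos, posPart_eq_zero.2 hnonpos,
      negPart_eq_neg.2 hnonpos]
    linear_combination div_mul_cancel₀ (z - θ) hpos.ne'
  · simp
  · have hpos : 0 < B - θ := by linarith
    have hnonneg : 0 ≤ (z - θ) / (B - θ) := div_nonneg (by linarith) hpos.le
    rw [vartheta_of_gt h, abs_of_nonneg hnonneg, posPart_eq_self.2 hnonneg,
      negPart_eq_zero.2 hnonneg]
    linear_combination div_mul_cancel₀ (z - θ) hpos.ne'

lemma le_vartheta_barycentric_of_convexOn {f : ℝ → ℝ} (hf : ConvexOn ℝ (Set.Icc (-B) B) f)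
    (hθ : θ ∈ Set.Icc (-B) B) (hz : z ∈ Set.Icc (-B) B) :
    f z ≤ (1 - |vartheta B θ z|) * f θ + (vartheta B θ z)⁺ * f B
      + (vartheta B θ z)⁻ * f (-B) := by
  have hB : -B ≤ B := hz.1.trans hz.2
  set t := vartheta B θ z
  have hnonneg : ∀ i ∈ Finset.univ, 0 ≤ ![1 - |t|, t⁺, t⁻] i := by
    simpa [Fin.forall_fin_succ, posPart_nonneg, negPart_nonneg] using abs_vartheta_le_one hz
  have hsum : ∑ i, ![1 - |t|, t⁺, t⁻] i = 1 := by
    simp only [Fin.sum_univ_three, Matrix.cons_val]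
    linear_combination posPart_add_negPart t
  have hnodes : ∀ i ∈ Finset.univ, ![θ, B, -B] i ∈ Set.Icc (-B) B := by
    simpa [Fin.forall_fin_succ, hB] using hθ
  have hJensen := hf.map_sum_le hnonneg hsum hnodes
  simp only [Fin.sum_univ_three, Matrix.cons_val, smul_eq_mul] at hJensen
  rwa [vartheta_barycentric hz] at hJensen

end Vartheta

section LogOneAddExp

open Real

lemma hasDerivAt_log_one_add_exp (x : ℝ) :
    HasDerivAt (fun y ↦ log (1 + exp y)) (sigmoid x) x := by
  have hne : 1 + exp x ≠ 0 := by positivity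
  convert ((hasDerivAt_exp x).const_add 1).log hne using 1
  rw [sigmoid_def, exp_neg]
  field_simp
  ring

lemma convexOn_log_one_add_exp : ConvexOn ℝ Set.univ fun x ↦ log (1 + exp x) := by
  refine Monotone.convexOn_univ_of_deriv
    (fun x ↦ (hasDerivAt_log_one_add_exp x).differentiableAt) ?_
  rw [funext fun x ↦ (hasDerivAt_log_one_add_exp x).deriv]
  exact sigmoid_monotone

lemma log_one_add_exp_neg (x : ℝ) : log (1 + exp (-x)) = log (1 + exp x) - x := by
  have hfactor : 1 + exp (-x) = (1 + exp x) / exp x := by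
    rw [exp_neg]
    field_simp
    ring
  rw [hfactor, log_div (by positivity) (by positivity), log_exp]

end LogOneAddExp

/-- For `B > 0`, `α ∈ ℝ`, `θ, z ∈ [−B, B]`:
`log(1 + exp(αz)) ≤ log((1 + exp(Bα))/(1 + exp(θα)))·|ϑ(z)| − Bα·max{0, −ϑ(z)} + log(1 + exp(θα))`. -/
theorem log_one_add_exp_general_secant (B α θ z : ℝ) (hB : 0 < B)
    (hθ : θ ∈ Set.Icc (-B) B) (hz : z ∈ Set.Icc (-B) B) :
    Real.log (1 + Real.exp (α * z)) ≤
      Real.log ((1 + Real.exp (B * α)) / (1 + Real.exp (θ * α))) * |vartheta B θ z|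
        - B * α * max 0 (-(vartheta B θ z)) + Real.log (1 + Real.exp (θ * α)) := by
  have hconvex : ConvexOn ℝ (Set.Icc (-B) B) fun x ↦ Real.log (1 + Real.exp (x * α)) :=
    (convexOn_log_one_add_exp.comp_linearMap (LinearMap.mulRight ℝ α)).subset
      (Set.subset_univ _) (convex_Icc _ _)
  have hsecant := le_vartheta_barycentric_of_convexOn hconvex hθ hz
  rw [neg_mul, log_one_add_exp_neg] at hsecant
  have hnegPart : max 0 (-(vartheta B θ z)) = (vartheta B θ z)⁻ := max_comm _ _
  rw [mul_comm α z, Real.log_div (by positivity) (by positivity), hnegPart]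
  linear_combination
    hsecant + Real.log (1 + Real.exp (B * α)) * posPart_add_negPart (vartheta B θ z)
end

section
/- Define a doubly-indexed family a_{k,j} of nonnegative reals by: a_{1,0} = 1; and for k ≥ 1, a_{k+1,0} = 1, a_{k+1,k} = 1, and a_{k+1,j} = (j+1)·a_{k,j} + (k+1−j)·a_{k,j−1} for 0 < j < k. Then for all k ≥ 1 and all 0 ≤ j ≤ k, a_{k+1,j} ≤ k! · C(k, j), where C(k,j) is the binomial coefficient. -/
/-!
The recursion and its boundary values are those of the Eulerian numbers, so `a (k + 1) j` is the
Eulerian number `⟨k + 1, j⟩`. In the recursion `⟨n + 2, k + 1⟩ = (k + 2) ⟨n + 1, k + 1⟩ +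
(n + 1 - k) ⟨n + 1, k⟩` each weight is at most `n + 1`, except where `n.choose (k + 1) = 0`, so
Pascal's rule propagates the bound `⟨n + 1, k⟩ ≤ n ! * n.choose k` from one row to the next.
-/

/-- The Eulerian number `⟨n, k⟩`, the number of permutations of `n` letters with exactly `k`
descents, defined by its triangular recursion; the coefficients `a_{k,j}` are these numbers. The
truncated subtraction `n - k` is harmless, as `⟨n, k⟩ = 0` when `n < k`. -/
def eulerian : ℕ → ℕ → ℕ
  | _, 0 => 1
  | 0, _ + 1 => 0
  | n + 1, k + 1 => (k + 2) * eulerian n (k + 1) + (n - k) * eulerian n k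

@[simp]
theorem eulerian_zero_right (n : ℕ) : eulerian n 0 = 1 := by
  simp [eulerian]

@[simp]
theorem eulerian_zero_succ (k : ℕ) : eulerian 0 (k + 1) = 0 := by
  simp [eulerian]

theorem eulerian_succ_succ (n k : ℕ) :
    eulerian (n + 1) (k + 1) = (k + 2) * eulerian n (k + 1) + (n - k) * eulerian n k := by
  simp [eulerian]

theorem succ_mul_choose_le_succ_mul_choose (n k : ℕ) :
    (k + 1) * n.choose k ≤ (n + 1) * n.choose k := by
  rcases le_or_gt k n with hkn | hnk
  · gcongr
  · simp [Nat.choose_eq_zero_of_lt hnk]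

theorem eulerian_succ_le_factorial_mul_choose (n k : ℕ) :
    eulerian (n + 1) k ≤ n.factorial * n.choose k := by
  induction n generalizing k with
  | zero => cases k <;> simp [eulerian_succ_succ]
  | succ n ih =>
    cases k with
    | zero => simp [Nat.one_le_iff_ne_zero, Nat.factorial_ne_zero]
    | succ k =>
      calc eulerian (n + 2) (k + 1)
          = (k + 2) * eulerian (n + 1) (k + 1) + (n + 1 - k) * eulerian (n + 1) k :=
            eulerian_succ_succ (n + 1) k
        _ ≤ (k + 2) * (n.factorial * n.choose (k + 1)) +
              (n + 1) * (n.factorial * n.choose k) := by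
            gcongr
            exacts [ih (k + 1), Nat.sub_le _ _, ih k]
        _ = n.factorial * ((k + 2) * n.choose (k + 1) + (n + 1) * n.choose k) := by ring
        _ ≤ n.factorial * ((n + 1) * n.choose (k + 1) + (n + 1) * n.choose k) := by
            gcongr n.factorial * (?_ + _)
            exact succ_mul_choose_le_succ_mul_choose n (k + 1)
        _ = (n + 1).factorial * (n + 1).choose (k + 1) := by
            rw [Nat.factorial_succ, Nat.choose_succ_succ']
            ring

theorem eulerian_succ_eq_zero_of_lt {n k : ℕ} (h : n < k) : eulerian (n + 1) k = 0 := by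
  simpa [Nat.choose_eq_zero_of_lt h] using eulerian_succ_le_factorial_mul_choose n k

theorem eulerian_succ_self (n : ℕ) : eulerian (n + 1) n = 1 := by
  induction n with
  | zero => simp
  | succ n ih => simp [eulerian_succ_succ (n + 1) n, eulerian_succ_eq_zero_of_lt n.lt_succ_self, ih]

theorem coeff_family_eq_eulerian {R : Type*} [Ring R] {a : ℕ → ℕ → R}
    (hzero : ∀ k, 1 ≤ k → a (k + 1) 0 = 1)
    (htop : ∀ k, 1 ≤ k → a (k + 1) k = 1)
    (hrec : ∀ k j, 1 ≤ k → 0 < j → j < k →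
      a (k + 1) j = ((j : R) + 1) * a k j + ((k : R) + 1 - (j : R)) * a k (j - 1))
    {k j : ℕ} (hk : 1 ≤ k) (hj : j ≤ k) : a (k + 1) j = eulerian (k + 1) j := by
  induction k, hk using Nat.le_induction generalizing j with
  | base =>
    interval_cases j
    · simp [hzero 1 le_rfl]
    · simp [htop 1 le_rfl, eulerian_succ_self]
  | succ k _ ih =>
    rcases hj.eq_or_lt with rfl | hlt
    · simp [htop (k + 1) (by lia), eulerian_succ_self]
    cases j with
    | zero => simp [hzero (k + 1) (by lia)]
    | succ j =>
      have hweight : ((k + 1 : ℕ) : R) + 1 - ((j + 1 : ℕ) : R) = ((k + 1 - j : ℕ) : R) := by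
        rw [Nat.cast_sub (by lia)]
        push_cast
        abel
      rw [hrec (k + 1) (j + 1) (by lia) j.succ_pos hlt, Nat.add_sub_cancel, hweight,
        ih (by lia), ih (by lia), eulerian_succ_succ (k + 1) j]
      push_cast
      rw [add_assoc (j : R), one_add_one_eq_two]

theorem coeff_family_le_factorial_mul_choose_general {R : Type*} [Ring R] [PartialOrder R]
    [IsOrderedRing R] (a : ℕ → ℕ → R)
    (hzero : ∀ k, 1 ≤ k → a (k + 1) 0 = 1)
    (htop : ∀ k, 1 ≤ k → a (k + 1) k = 1)
    (hrec : ∀ k j, 1 ≤ k → 0 < j → j < k →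
      a (k + 1) j = ((j : R) + 1) * a k j + ((k : R) + 1 - (j : R)) * a k (j - 1))
    (k j : ℕ) (hk : 1 ≤ k) (hj : j ≤ k) :
    a (k + 1) j ≤ (Nat.factorial k : R) * (Nat.choose k j : R) := by
  rw [coeff_family_eq_eulerian hzero htop hrec hk hj]
  exact_mod_cast Nat.mono_cast (α := R) (eulerian_succ_le_factorial_mul_choose k j)

/-- Bound on the recursively defined nonnegative family `a_{k,j}`:
`a_{k+1,j} ≤ k! · C(k,j)` for all `k ≥ 1` and `0 ≤ j ≤ k`. -/
theorem coeff_family_le_factorial_mul_choose (a : ℕ → ℕ → ℝ)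
    (hnonneg : ∀ k j, 0 ≤ a k j)
    (h10 : a 1 0 = 1)
    (hzero : ∀ k, 1 ≤ k → a (k + 1) 0 = 1)
    (htop : ∀ k, 1 ≤ k → a (k + 1) k = 1)
    (hrec : ∀ k j, 1 ≤ k → 0 < j → j < k →
      a (k + 1) j = ((j : ℝ) + 1) * a k j + ((k : ℝ) + 1 - (j : ℝ)) * a k (j - 1)) :
    ∀ k j, 1 ≤ k → j ≤ k →
      a (k + 1) j ≤ (Nat.factorial k : ℝ) * (Nat.choose k j : ℝ) :=
  coeff_family_le_factorial_mul_choose_general a hzero htop hrec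
end

section
/- For a > 0, let f(z) := a^{1+z}/(1 + a^{1+z}). Define polynomials P_k ∈ ℝ[x] by P_1 := 1 and, writing c_{k,j} for the coefficient of x^j in P_k: c_{k+1,k} = (−1)^k, c_{k+1,0} = 1, and c_{k+1,j} = (j+1)·c_{k,j} − (k+1−j)·c_{k,j−1} for 0 < j < k. Then for every integer k ≥ 1 and every z ∈ ℝ, the k-th derivative of f satisfies f^{(k)}(z) = (log a)^k · a^{1+z}/(1 + a^{1+z})^{k+1} · P_k(a^{1+z}). Equivalently, P_{k+1}(x) = (−k x + 1)·P_k(x) + x(1+x)·P_k'(x). -/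
open Polynomial

/-- The function `f(z) = a^{1+z}/(1 + a^{1+z})` (with `a^{1+z}` the real power). -/
noncomputable def sigmoidPow (a : ℝ) (z : ℝ) : ℝ := a ^ (1 + z) / (1 + a ^ (1 + z))

/-!
The function `g(z) = a ^ (1 + z)` satisfies `g' = c g` with `c = log a`. For any such `g`, the
derivative of `g / (1 + g) ^ (k + 1) * p(g)` is `c` times an expression of the same shape, with
`k + 1` in place of `k` and `(1 - k x) p + x (1 + x) p'` in place of `p`. Starting from `k = 0` and
`p = 1`, the polynomials so produced satisfy the coefficient recursion.
-/

open scoped Topology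

theorem coeff_X_mul_derivative {R : Type*} [Semiring R] (p : R[X]) (j : ℕ) :
    (X * derivative p).coeff j = j * p.coeff j := by
  cases j with
  | zero => simp
  | succ j => rw [coeff_X_mul, coeff_derivative, ← Nat.cast_succ, Nat.cast_comm]

/-- The operator `p ↦ (1 - r x) p + x (1 + x) p'` on polynomials. For `r = k` it describes how the
numerator `p` changes when `g / (1 + g) ^ (k + 1) * p(g)` with `g' = c g` is differentiated. -/
noncomputable def logisticStep {R : Type*} [CommRing R] (r : R) (p : R[X]) : R[X] :=
  (C (-r) * X + 1) * p + X * (1 + X) * derivative p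

section Coefficients

variable {R : Type*} [CommRing R]

theorem logisticStep_zero_one : logisticStep (0 : R) 1 = 1 := by
  simp [logisticStep]

theorem coeff_zero_logisticStep (r : R) (p : R[X]) :
    (logisticStep r p).coeff 0 = p.coeff 0 := by
  simp [logisticStep]

theorem coeff_succ_logisticStep (r : R) (p : R[X]) (j : ℕ) :
    (logisticStep r p).coeff (j + 1) = (j + 2) * p.coeff (j + 1) - (r - j) * p.coeff j := by
  have hexpand : logisticStep r p =
      C (-r) * (X * p) + p + X * derivative p + X * (X * derivative p) := by
    rw [logisticStep]; ring
  simp only [hexpand, coeff_add, coeff_C_mul, coeff_X_mul, coeff_X_mul_derivative,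
    coeff_derivative]
  ring

theorem eq_logisticStep_of_coeff {p q : R[X]} {n : ℕ} (hp : p.natDegree ≤ n)
    (hq : q.natDegree ≤ n + 1) (hzero : q.coeff 0 = p.coeff 0)
    (htop : q.coeff (n + 1) = -p.coeff n)
    (hrec : ∀ j < n, q.coeff (j + 1) = (j + 2) * p.coeff (j + 1) - (n + 1 - j) * p.coeff j) :
    q = logisticStep (n + 1 : R) p := by
  have hp_coeff {j : ℕ} (hj : n < j) : p.coeff j = 0 :=
    coeff_eq_zero_of_natDegree_lt (hp.trans_lt hj)
  ext j
  cases j with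
  | zero => rw [hzero, coeff_zero_logisticStep]
  | succ j =>
    rw [coeff_succ_logisticStep]
    rcases lt_trichotomy j n with hj | rfl | hj
    · exact hrec j hj
    · rw [htop, hp_coeff j.lt_succ_self]; ring
    · rw [hp_coeff hj, hp_coeff (hj.trans j.lt_succ_self),
        coeff_eq_zero_of_natDegree_lt (by lia)]
      ring

theorem eq_logisticStep_of_coeff_recurrence {P : ℕ → R[X]} (hP1 : P 1 = 1)
    (htop : ∀ k, 1 ≤ k → (P (k + 1)).coeff k = (-1) ^ k)
    (hzero : ∀ k, 1 ≤ k → (P (k + 1)).coeff 0 = 1)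
    (hrec : ∀ k j, 1 ≤ k → 0 < j → j < k →
      (P (k + 1)).coeff j = (j + 1) * (P k).coeff j - (k + 1 - j) * (P k).coeff (j - 1))
    (hdeg : ∀ k, 1 ≤ k → (P k).natDegree ≤ k - 1) {k : ℕ} (hk : 1 ≤ k) :
    P (k + 1) = logisticStep (k : R) (P k) := by
  have coeff_zero_eq (n : ℕ) : (P (n + 1)).coeff 0 = 1 := by
    cases n with
    | zero => simp [hP1]
    | succ n => exact hzero _ n.succ_pos
  have coeff_top_eq (n : ℕ) : (P (n + 1)).coeff n = (-1) ^ n := by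
    cases n with
    | zero => simp [hP1]
    | succ n => exact htop _ n.succ_pos
  obtain ⟨n, rfl⟩ := Nat.exists_eq_add_of_le' hk
  rw [Nat.cast_succ]
  refine eq_logisticStep_of_coeff (hdeg _ hk) (hdeg _ (Nat.succ_pos _)) ?_ ?_ fun j hj => ?_
  · rw [coeff_zero_eq, coeff_zero_eq]
  · rw [coeff_top_eq, coeff_top_eq, pow_succ, mul_neg_one]
  · rw [hrec (n + 1) (j + 1) hk j.succ_pos (Nat.succ_lt_succ hj), Nat.add_sub_cancel]
    push_cast
    ring

end Coefficients

section Derivatives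

variable {𝕜 : Type*} [NontriviallyNormedField 𝕜] {g : 𝕜 → 𝕜} {c : 𝕜}

theorem hasDerivAt_div_one_add_pow_mul_eval {z : 𝕜} (hg : HasDerivAt g (c * g z) z)
    (hz : 1 + g z ≠ 0) (k : ℕ) (p : 𝕜[X]) :
    HasDerivAt (fun w => g w / (1 + g w) ^ (k + 1) * p.eval (g w))
      (c * (g z / (1 + g z) ^ (k + 2) * (logisticStep (k : 𝕜) p).eval (g z))) z := by
  have hquot := hg.fun_div ((hg.const_add 1).fun_pow (k + 1)) (pow_ne_zero _ hz)
  refine (hquot.fun_mul ((p.hasDerivAt (g z)).comp z hg)).congr_deriv ?_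
  simp only [logisticStep, eval_add, eval_mul, eval_C, eval_X, eval_one, Function.comp_apply,
    Nat.add_sub_cancel, Nat.cast_succ]
  field_simp
  ring

theorem iteratedDeriv_div_one_add (hg : ∀ z, HasDerivAt g (c * g z) z) {P : ℕ → 𝕜[X]}
    (hP1 : P 1 = 1) (hP : ∀ k, 1 ≤ k → P (k + 1) = logisticStep (k : 𝕜) (P k))
    {k : ℕ} (hk : 1 ≤ k) {z : 𝕜} (hz : 1 + g z ≠ 0) :
    iteratedDeriv k (fun w => g w / (1 + g w)) z =
      c ^ k * g z / (1 + g z) ^ (k + 1) * (P k).eval (g z) := by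
  induction k, hk using Nat.le_induction generalizing z with
  | base =>
    have hderiv := hasDerivAt_div_one_add_pow_mul_eval (hg z) hz 0 1
    rw [Nat.cast_zero, logisticStep_zero_one] at hderiv
    simp only [zero_add, pow_one, eval_one, mul_one] at hderiv
    rw [iteratedDeriv_one, hderiv.deriv, hP1, eval_one]
    ring
  | succ k hk ih =>
    have hne : ∀ᶠ w in 𝓝 z, 1 + g w ≠ 0 :=
      ((hg z).continuousAt.const_add 1).eventually_ne hz
    have hformula : iteratedDeriv k (fun w => g w / (1 + g w)) =ᶠ[𝓝 z]
        fun w => c ^ k * (g w / (1 + g w) ^ (k + 1) * (P k).eval (g w)) := by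
      filter_upwards [hne] with w hw
      rw [ih hw]
      ring
    have hderiv := (hasDerivAt_div_one_add_pow_mul_eval (hg z) hz k (P k)).const_mul (c ^ k)
    rw [iteratedDeriv_succ, hformula.deriv_eq, hderiv.deriv, hP k hk]
    ring

theorem iteratedDeriv_sigmoidPow_general (hg : ∀ z, HasDerivAt g (c * g z) z)
    {P : ℕ → 𝕜[X]} (hP1 : P 1 = 1)
    (htop : ∀ k, 1 ≤ k → (P (k + 1)).coeff k = (-1) ^ k)
    (hzero : ∀ k, 1 ≤ k → (P (k + 1)).coeff 0 = 1)
    (hrec : ∀ k j, 1 ≤ k → 0 < j → j < k →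
      (P (k + 1)).coeff j = (j + 1) * (P k).coeff j - (k + 1 - j) * (P k).coeff (j - 1))
    (hdeg : ∀ k, 1 ≤ k → (P k).natDegree ≤ k - 1) :
    (∀ k, 1 ≤ k → ∀ z, 1 + g z ≠ 0 →
      iteratedDeriv k (fun w => g w / (1 + g w)) z =
        c ^ k * g z / (1 + g z) ^ (k + 1) * (P k).eval (g z)) ∧
    (∀ k, 1 ≤ k →
      P (k + 1) = (C (-(k : 𝕜)) * X + 1) * P k + X * (1 + X) * derivative (P k)) := by
  have hP (k : ℕ) (hk : 1 ≤ k) : P (k + 1) = logisticStep (k : 𝕜) (P k) :=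
    eq_logisticStep_of_coeff_recurrence hP1 htop hzero hrec hdeg hk
  exact ⟨fun _ hk _ hz => iteratedDeriv_div_one_add hg hP1 hP hk hz, hP⟩

end Derivatives

theorem hasDerivAt_const_rpow_one_add {a : ℝ} (ha : 0 < a) (z : ℝ) :
    HasDerivAt (fun w : ℝ => a ^ (1 + w)) (Real.log a * a ^ (1 + z)) z := by
  simpa only [mul_one, id_eq] using ((hasDerivAt_id z).const_add 1).const_rpow ha

/-- For `a > 0` and `P_k` the polynomials defined by the coefficient recursion
(`P_1 = 1`, `c_{k+1,k} = (−1)^k`, `c_{k+1,0} = 1`,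
`c_{k+1,j} = (j+1)·c_{k,j} − (k+1−j)·c_{k,j−1}` for `0 < j < k`, with `deg P_k ≤ k−1`),
the k-th derivative of `f(z) = a^{1+z}/(1+a^{1+z})` is
`f^{(k)}(z) = (log a)^k · a^{1+z}/(1+a^{1+z})^{k+1} · P_k(a^{1+z})`; equivalently the
polynomials satisfy `P_{k+1}(x) = (−k·x + 1)·P_k(x) + x(1+x)·P_k'(x)`. -/
theorem iteratedDeriv_sigmoidPow (a : ℝ) (ha : 0 < a) (P : ℕ → Polynomial ℝ)
    (hP1 : P 1 = 1)
    (htop : ∀ k, 1 ≤ k → (P (k + 1)).coeff k = (-1 : ℝ) ^ k)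
    (hzero : ∀ k, 1 ≤ k → (P (k + 1)).coeff 0 = 1)
    (hrec : ∀ k j, 1 ≤ k → 0 < j → j < k →
      (P (k + 1)).coeff j =
        ((j : ℝ) + 1) * (P k).coeff j - ((k : ℝ) + 1 - (j : ℝ)) * (P k).coeff (j - 1))
    (hdeg : ∀ k, 1 ≤ k → (P k).natDegree ≤ k - 1) :
    (∀ k, 1 ≤ k → ∀ z : ℝ,
      iteratedDeriv k (sigmoidPow a) z =
        (Real.log a) ^ k * a ^ (1 + z) / (1 + a ^ (1 + z)) ^ (k + 1)
          * (P k).eval (a ^ (1 + z))) ∧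
    (∀ k, 1 ≤ k →
      P (k + 1) = (Polynomial.C (-(k : ℝ)) * Polynomial.X + 1) * P k
        + Polynomial.X * (1 + Polynomial.X) * Polynomial.derivative (P k)) := by
  obtain ⟨hderiv, hpoly⟩ := iteratedDeriv_sigmoidPow_general
    (hasDerivAt_const_rpow_one_add ha) hP1 htop hzero hrec hdeg
  exact ⟨fun k hk z => hderiv k hk z (by positivity), hpoly⟩
end

section
/- Let 0 < B ≤ 3, let u ∈ (0,1) satisfy |logit(u)| ≤ B, and let α ∈ ℝ satisfy |α − 1| ≤ 1/B. Set v := T_α(u). Then KL(u‖v) ≤ π²/(6·(2 + exp(B) + exp(−B))). -/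
/-- `logit u = log(u/(1−u))`. -/
noncomputable def logit (u : ℝ) : ℝ := Real.log (u / (1 - u))

/-- The α-correction of `u`: `T α u = u^α / (u^α + (1-u)^α)`. -/
noncomputable def alphaCorr (α u : ℝ) : ℝ := u ^ α / (u ^ α + (1 - u) ^ α)

/-- KL divergence between `Bernoulli u` and `Bernoulli v`. -/
noncomputable def bernKL (u v : ℝ) : ℝ :=
  u * Real.log (u / v) + (1 - u) * Real.log ((1 - u) / (1 - v))

/-!
Let `d = logit v - logit u` and let `X` be Bernoulli with mean `u`. Then `KL(u ‖ v)` is the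
cumulant generating function of `X - u` at `d`, so `log y ≤ y - 1` and `exp y ≤ 1 + y + y²` for
`|y| ≤ 1` bound it by the variance term `u (1 - u) d²` when `|d| ≤ 1`. For `v = T_α(u)` and
`x = logit u` we have `d = (α - 1) x` and `u (1 - u) = 1 / (4 cosh² (x / 2))`. Since
`|d| ≤ |x| / B`, it remains to compare `a / cosh a` at `a = |x| / 2` and at `a = B / 2`, and to see
that this function is increasing on `[0, 2]` up to a factor `π / √6 ≈ 1.2825`. This holds because
`cosh a` is there within a factor `1.28` of `max 1 (3 a / 2)`, for which the monotonicity is exact.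
-/

open Real

lemma exp_le_one_add_self_add_sq {y : ℝ} (hy : |y| ≤ 1) : exp y ≤ 1 + y + y ^ 2 := by
  linarith [(abs_le.1 (abs_exp_sub_one_sub_id_le hy)).2]

lemma two_add_exp_add_exp_neg (x : ℝ) : 2 + exp x + exp (-x) = 4 * cosh (x / 2) ^ 2 := by
  have hdouble := cosh_two_mul (x / 2)
  rw [mul_div_cancel₀ x two_ne_zero, sinh_sq, cosh_eq x] at hdouble
  linarith

section Bernoulli

variable {u v : ℝ}

lemma logit_eq_log_sub_log (hu0 : 0 < u) (hu1 : u < 1) : logit u = log u - log (1 - u) :=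
  log_div hu0.ne' (sub_pos.2 hu1).ne'

lemma exp_bernKL (hu0 : 0 < u) (hu1 : u < 1) (hv0 : 0 < v) (hv1 : v < 1) :
    exp (bernKL u v) =
      u * exp ((1 - u) * (logit v - logit u)) + (1 - u) * exp (-u * (logit v - logit u)) := by
  have hu1' : 0 < 1 - u := sub_pos.2 hu1
  have hv1' : 0 < 1 - v := sub_pos.2 hv1
  have hKL : bernKL u v = u * (log u - log v) + (1 - u) * (log (1 - u) - log (1 - v)) := by
    rw [bernKL, log_div hu0.ne' hv0.ne', log_div hu1'.ne' hv1'.ne']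
  have h_one : (1 - u) * (logit v - logit u) = log v - log u + bernKL u v := by
    rw [logit_eq_log_sub_log hu0 hu1, logit_eq_log_sub_log hv0 hv1, hKL]
    ring
  have h_zero : -u * (logit v - logit u) = log (1 - v) - log (1 - u) + bernKL u v := by
    rw [logit_eq_log_sub_log hu0 hu1, logit_eq_log_sub_log hv0 hv1, hKL]
    ring
  rw [h_one, h_zero, exp_add, exp_add, exp_sub, exp_sub, exp_log hu0, exp_log hv0, exp_log hu1',
    exp_log hv1']
  field_simp
  ring

lemma bernKL_le_mul_sq_logit_sub (hu0 : 0 < u) (hu1 : u < 1) (hv0 : 0 < v) (hv1 : v < 1)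
    (hd : |logit v - logit u| ≤ 1) :
    bernKL u v ≤ u * (1 - u) * (logit v - logit u) ^ 2 := by
  have hexp := exp_bernKL hu0 hu1 hv0 hv1
  set d := logit v - logit u
  have hu1' : 0 < 1 - u := sub_pos.2 hu1
  have h_one : |(1 - u) * d| ≤ 1 := by
    rw [abs_mul, abs_of_pos hu1']
    exact mul_le_one₀ (by linarith) (abs_nonneg d) hd
  have h_zero : |-u * d| ≤ 1 := by
    rw [abs_mul, abs_neg, abs_of_pos hu0]
    exact mul_le_one₀ hu1.le (abs_nonneg d) hd
  calc bernKL u v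
      ≤ exp (bernKL u v) - 1 := by linarith [add_one_le_exp (bernKL u v)]
    _ = u * exp ((1 - u) * d) + (1 - u) * exp (-u * d) - 1 := by rw [hexp]
    _ ≤ u * (1 + (1 - u) * d + ((1 - u) * d) ^ 2) + (1 - u) * (1 + -u * d + (-u * d) ^ 2) - 1 := by
        gcongr
        · exact exp_le_one_add_self_add_sq h_one
        · exact exp_le_one_add_self_add_sq h_zero
    _ = u * (1 - u) * d ^ 2 := by ring

lemma alphaCorr_pos (α : ℝ) (hu0 : 0 < u) (hu1 : u < 1) : 0 < alphaCorr α u := by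
  have : 0 < 1 - u := sub_pos.2 hu1
  unfold alphaCorr
  positivity

lemma one_sub_alphaCorr (α : ℝ) (hu0 : 0 < u) (hu1 : u < 1) :
    1 - alphaCorr α u = alphaCorr α (1 - u) := by
  have : 0 < 1 - u := sub_pos.2 hu1
  have hsum : u ^ α + (1 - u) ^ α ≠ 0 := by positivity
  rw [alphaCorr, alphaCorr, sub_sub_cancel, add_comm ((1 - u) ^ α), one_sub_div hsum,
    add_sub_cancel_left]

lemma alphaCorr_lt_one (α : ℝ) (hu0 : 0 < u) (hu1 : u < 1) : alphaCorr α u < 1 := by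
  rw [← sub_pos, one_sub_alphaCorr α hu0 hu1]
  exact alphaCorr_pos α (sub_pos.2 hu1) (sub_lt_self 1 hu0)

lemma logit_alphaCorr (α : ℝ) (hu0 : 0 < u) (hu1 : u < 1) :
    logit (alphaCorr α u) = α * logit u := by
  have hu1' : 0 < 1 - u := sub_pos.2 hu1
  have hodds : alphaCorr α u / (1 - alphaCorr α u) = (u / (1 - u)) ^ α := by
    rw [one_sub_alphaCorr α hu0 hu1, alphaCorr, alphaCorr, sub_sub_cancel,
      add_comm ((1 - u) ^ α), div_div_div_cancel_right₀ (by positivity),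
      div_rpow hu0.le hu1'.le]
  rw [logit, hodds, log_rpow (div_pos hu0 hu1'), logit]

lemma bernKL_alphaCorr_le_mul_sq {α : ℝ} (hu0 : 0 < u) (hu1 : u < 1)
    (hd : |(α - 1) * logit u| ≤ 1) :
    bernKL u (alphaCorr α u) ≤ u * (1 - u) * ((α - 1) * logit u) ^ 2 := by
  have hshift : logit (alphaCorr α u) - logit u = (α - 1) * logit u := by
    rw [logit_alphaCorr α hu0 hu1]
    ring
  rw [← hshift] at hd ⊢
  exact bernKL_le_mul_sq_logit_sub hu0 hu1 (alphaCorr_pos α hu0 hu1) (alphaCorr_lt_one α hu0 hu1) hd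

lemma mul_one_sub_eq_inv_cosh_logit (hu0 : 0 < u) (hu1 : u < 1) :
    u * (1 - u) = (4 * cosh (logit u / 2) ^ 2)⁻¹ := by
  have hu1' : 0 < 1 - u := sub_pos.2 hu1
  rw [← two_add_exp_add_exp_neg, exp_neg, logit, exp_log (div_pos hu0 hu1')]
  field_simp
  ring

end Bernoulli

lemma convexOn_cosh : ConvexOn ℝ Set.univ cosh :=
  Monotone.convexOn_univ_of_deriv differentiable_cosh (Real.deriv_cosh ▸ sinh_strictMono.monotone)

lemma one_add_sq_add_pow_four_le_cosh (x : ℝ) : 1 + x ^ 2 / 2 + x ^ 4 / 24 ≤ cosh x := by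
  have hpartial := sum_le_hasSum (Finset.range 3)
    (fun i _ ↦ div_nonneg ((even_two_mul i).pow_nonneg x) (Nat.cast_nonneg _)) (hasSum_cosh x)
  simpa [Finset.sum_range_succ, Nat.factorial] using hpartial

lemma max_one_le_cosh (x : ℝ) : max 1 (3 / 2 * x) ≤ cosh x := by
  refine max_le (one_le_cosh x) (le_trans ?_ (one_add_sq_add_pow_four_le_cosh x))
  -- The difference is smallest near `x = 6 / 5`, where these squares vanish.
  nlinarith [sq_nonneg (x ^ 2 - 36 / 25), sq_nonneg (x - 6 / 5)]

lemma cosh_two_thirds_le : cosh (2 / 3) ≤ 32 / 25 :=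
  calc cosh (2 / 3)
      ≤ exp ((2 / 3) ^ 2 / 2) := cosh_le_exp_half_sq _
    _ ≤ 1 + (2 / 3) ^ 2 / 2 + ((2 / 3) ^ 2 / 2) ^ 2 :=
        exp_le_one_add_self_add_sq (by norm_num [abs_le])
    _ ≤ 32 / 25 := by norm_num

lemma cosh_two_le : cosh 2 ≤ 96 / 25 := by
  have hexp : exp 2 = exp 1 ^ 2 := by rw [← exp_nat_mul]; norm_num
  have hlower : 4 ≤ exp 2 := by nlinarith [exp_one_gt_d9]
  have hupper : exp 2 ≤ 7.4 := by nlinarith [exp_one_lt_d9, exp_pos 1]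
  have hneg : exp (-2) ≤ 4⁻¹ := exp_neg 2 ▸ inv_anti₀ (by norm_num) hlower
  rw [cosh_eq]
  linarith

lemma cosh_le_mul_max {x : ℝ} (hx0 : 0 ≤ x) (hx2 : x ≤ 2) :
    cosh x ≤ 32 / 25 * max 1 (3 / 2 * x) := by
  rcases le_total x (2 / 3) with hx | hx
  · calc cosh x
        ≤ cosh (2 / 3) := cosh_le_cosh.2 (abs_le_abs_of_nonneg hx0 hx)
      _ ≤ 32 / 25 * 1 := by linarith [cosh_two_thirds_le]
      _ ≤ 32 / 25 * max 1 (3 / 2 * x) := by gcongr; exact le_max_left _ _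
  · have hchord := convexOn_cosh.2 (Set.mem_univ (2 / 3)) (Set.mem_univ 2)
      (show 0 ≤ 3 / 4 * (2 - x) by linarith) (show 0 ≤ 3 / 4 * (x - 2 / 3) by linarith) (by ring)
    simp only [smul_eq_mul] at hchord
    rw [show 3 / 4 * (2 - x) * (2 / 3) + 3 / 4 * (x - 2 / 3) * 2 = x by ring] at hchord
    calc cosh x
        ≤ 3 / 4 * (2 - x) * cosh (2 / 3) + 3 / 4 * (x - 2 / 3) * cosh 2 := hchord
      _ ≤ 3 / 4 * (2 - x) * (32 / 25) + 3 / 4 * (x - 2 / 3) * (96 / 25) := by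
          have : 0 ≤ 2 - x := by linarith
          have : 0 ≤ x - 2 / 3 := by linarith
          gcongr
          · exact cosh_two_thirds_le
          · exact cosh_two_le
      _ = 32 / 25 * (3 / 2 * x) := by ring
      _ ≤ 32 / 25 * max 1 (3 / 2 * x) := by gcongr; exact le_max_right _ _

lemma mul_cosh_le_mul_cosh {a b : ℝ} (ha : 0 ≤ a) (hab : a ≤ b) (hb : b ≤ 2) :
    a * cosh b ≤ 32 / 25 * (b * cosh a) := by
  have hb0 : 0 ≤ b := ha.trans hab
  have hmax : a * max 1 (3 / 2 * b) ≤ b * max 1 (3 / 2 * a) := by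
    rw [mul_max_of_nonneg _ _ ha, mul_max_of_nonneg _ _ hb0]
    exact max_le_max (by linarith) (by linarith)
  calc a * cosh b
      ≤ a * (32 / 25 * max 1 (3 / 2 * b)) := by gcongr; exact cosh_le_mul_max hb0 hb
    _ = 32 / 25 * (a * max 1 (3 / 2 * b)) := by ring
    _ ≤ 32 / 25 * (b * max 1 (3 / 2 * a)) := by gcongr
    _ ≤ 32 / 25 * (b * cosh a) := by gcongr; exact max_one_le_cosh a

theorem bernKL_alphaCorr_le_general {B u α : ℝ} (hB0 : 0 < B) (hB4 : B ≤ 4)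
    (hu0 : 0 < u) (hu1 : u < 1) (hlogit : |logit u| ≤ B) (hα : |α - 1| ≤ 1 / B) :
    bernKL u (alphaCorr α u) ≤ π ^ 2 / (6 * (2 + exp B + exp (-B))) := by
  have hd : |(α - 1) * logit u| ≤ |logit u| / B := by
    rw [abs_mul, div_eq_mul_one_div, mul_comm]
    gcongr
  have hcosh : |logit u| / B ≤ 32 / 25 * cosh (logit u / 2) / cosh (B / 2) := by
    have h := mul_cosh_le_mul_cosh (a := |logit u / 2|) (b := B / 2) (abs_nonneg _)
      (by rw [abs_div, abs_two]; linarith) (by linarith)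
    rw [cosh_abs, abs_div, abs_two] at h
    rw [div_le_div_iff₀ hB0 (cosh_pos _)]
    linarith
  have hπ : (32 / 25 : ℝ) ^ 2 ≤ π ^ 2 / 6 := by nlinarith [pi_gt_d2]
  have := cosh_pos (logit u / 2)
  calc bernKL u (alphaCorr α u)
      ≤ u * (1 - u) * ((α - 1) * logit u) ^ 2 :=
        bernKL_alphaCorr_le_mul_sq hu0 hu1 (hd.trans ((div_le_one hB0).2 hlogit))
    _ = (4 * cosh (logit u / 2) ^ 2)⁻¹ * |(α - 1) * logit u| ^ 2 := by
        rw [mul_one_sub_eq_inv_cosh_logit hu0 hu1, sq_abs]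
    _ ≤ (4 * cosh (logit u / 2) ^ 2)⁻¹ * (32 / 25 * cosh (logit u / 2) / cosh (B / 2)) ^ 2 := by
        gcongr
        exact hd.trans hcosh
    _ = (32 / 25) ^ 2 / (4 * cosh (B / 2) ^ 2) := by field_simp
    _ ≤ π ^ 2 / 6 / (4 * cosh (B / 2) ^ 2) := by gcongr
    _ = π ^ 2 / (6 * (2 + exp B + exp (-B))) := by rw [two_add_exp_add_exp_neg, div_div]

/-- For `0 < B ≤ 3`, `u ∈ (0,1)` with `|logit u| ≤ B`, and `|α − 1| ≤ 1/B`,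
`KL(u ‖ T_α(u)) ≤ π²/(6(2 + e^B + e^{−B}))`. -/
theorem bernKL_alphaCorr_le (B : ℝ) (hB0 : 0 < B) (hB3 : B ≤ 3)
    (u : ℝ) (hu0 : 0 < u) (hu1 : u < 1) (hlogit : |logit u| ≤ B)
    (α : ℝ) (hα : |α - 1| ≤ 1 / B) :
    bernKL u (alphaCorr α u) ≤
      Real.pi ^ 2 / (6 * (2 + Real.exp B + Real.exp (-B))) :=
  bernKL_alphaCorr_le_general hB0 (by linarith) hu0 hu1 hlogit hα
end

section
/- Let μ be a probability measure on a measurable space X, let ρ_u : X → (0,1) and α : X → ℝ be measurable, and suppose |logit(ρ_u(x)) · (1 − α(x))| ≤ 1 for μ-almost every x. Define ρ_f(x) := T_{α(x)}(ρ_u(x)). Then ∫_X KL(ρ_u(x)‖ρ_f(x)) dμ(x) ≤ π²/24. -/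
open MeasureTheory

/-!
Under `Ber(u)` the log-likelihood ratio `Y = log (dBer(v) / dBer(u))` satisfies `𝔼 exp Y = 1` and
`𝔼 Y = -KL(u‖v)`, and its two values differ by `logit u - logit v`. Hoeffding's lemma for `Y`
therefore gives `KL(u‖v) ≤ (logit u - logit v)² / 8`. Since `T_α` multiplies the logit by `α`, this
reads `KL(u‖v) ≤ (logit u * (1 - α))² / 8` for `v = T_α(u)`, and `1 / 8 ≤ π² / 24`.
-/

open ProbabilityTheory Set

lemma cgf_le_of_mem_Icc {Ω : Type*} [MeasurableSpace Ω] {μ : Measure Ω} [IsProbabilityMeasure μ]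
    {Y : Ω → ℝ} {a b : ℝ} (hY : AEMeasurable Y μ) (hab : ∀ᵐ ω ∂μ, Y ω ∈ Icc a b) (t : ℝ) :
    cgf Y μ t ≤ t * μ[Y] + ((b - a) * t) ^ 2 / 8 := by
  have hoeffding := (hasSubgaussianMGF_of_mem_Icc hY hab).mgf_le t
  have mgf_center : mgf (fun ω ↦ Y ω - μ[Y]) μ t = mgf Y μ t * Real.exp (-(t * μ[Y])) := by
    simpa only [sub_eq_add_neg, mul_neg] using mgf_add_const (-μ[Y])
  have mgf_Y_pos : 0 < mgf Y μ t := mgf_pos (integrable_exp_mul_of_mem_Icc hY hab)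
  rw [mgf_center, ← Real.log_le_log_iff (by positivity) (Real.exp_pos _),
    Real.log_mul mgf_Y_pos.ne' (Real.exp_ne_zero _), Real.log_exp, Real.log_exp] at hoeffding
  push_cast [Real.norm_eq_abs, div_pow, sq_abs] at hoeffding
  rw [cgf]
  linarith

lemma ae_bernoulliMeasure {Ω : Type*} [MeasurableSpace Ω] [MeasurableSingletonClass Ω]
    {x y : Ω} {p : unitInterval} {P : Ω → Prop} (hx : P x) (hy : P y) :
    ∀ᵐ z ∂bernoulliMeasure x y p, P z := by
  rw [bernoulliMeasure_def, ae_add_measure_iff]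
  exact ⟨Measure.ae_smul_measure (by simpa [ae_dirac_eq] using hx) _,
    Measure.ae_smul_measure (by simpa [ae_dirac_eq] using hy) _⟩

lemma sub_le_mul_log_div {u v : ℝ} (hu : 0 ≤ u) (hv : 0 < v) : u - v ≤ u * Real.log (u / v) := by
  obtain rfl | hu := hu.eq_or_lt
  · simpa using hv.le
  · have := mul_le_mul_of_nonneg_left (Real.one_sub_inv_le_log_of_pos (div_pos hu hv)) hu.le
    rwa [inv_div, mul_sub, mul_one, mul_div_cancel₀ v hu.ne'] at this

lemma bernKL_nonneg {u v : ℝ} (hu : u ∈ Icc 0 1) (hv : v ∈ Ioo 0 1) : 0 ≤ bernKL u v := by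
  rw [bernKL]
  linarith [sub_le_mul_log_div hu.1 hv.1,
    sub_le_mul_log_div (sub_nonneg.2 hu.2) (sub_pos.2 hv.2)]

lemma logit_eq_log_sub_log_s8 {u : ℝ} (hu : u ∈ Ioo 0 1) :
    logit u = Real.log u - Real.log (1 - u) :=
  Real.log_div hu.1.ne' (sub_pos.2 hu.2).ne'

lemma bernKL_le_sq_logit_sub_logit {u v : ℝ} (hu : u ∈ Ioo 0 1) (hv : v ∈ Ioo 0 1) :
    bernKL u v ≤ (logit u - logit v) ^ 2 / 8 := by
  have hu₁ : 0 < 1 - u := sub_pos.2 hu.2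
  have hv₁ : 0 < 1 - v := sub_pos.2 hv.2
  set x := Real.log (v / u) with hx
  set y := Real.log ((1 - v) / (1 - u)) with hy
  let μ : Measure ℝ := bernoulliMeasure x y ⟨u, hu.1.le, hu.2.le⟩
  have mean_eq : μ[id] = -bernKL u v := by
    simp only [μ, integral_bernoulliMeasure, bernKL, id, smul_eq_mul, hx, hy]
    rw [← inv_div v u, ← inv_div (1 - v), Real.log_inv, Real.log_inv]
    ring
  have cgf_eq : cgf id μ 1 = 0 := by
    have mgf_eq : mgf id μ 1 = 1 := by
      simp only [μ, mgf, integral_bernoulliMeasure, id, smul_eq_mul, one_mul, hx, hy,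
        Real.exp_log (div_pos hv.1 hu.1), Real.exp_log (div_pos hv₁ hu₁),
        mul_div_cancel₀ _ hu.1.ne', mul_div_cancel₀ _ hu₁.ne']
      ring
    rw [cgf, mgf_eq, Real.log_one]
  have mem_Icc : ∀ᵐ z ∂μ, id z ∈ Icc (min x y) (max x y) :=
    ae_bernoulliMeasure left_mem_uIcc right_mem_uIcc
  have logit_sub : logit u - logit v = y - x := by
    rw [logit_eq_log_sub_log_s8 hu, logit_eq_log_sub_log_s8 hv, hx, hy,
      Real.log_div hv.1.ne' hu.1.ne', Real.log_div hv₁.ne' hu₁.ne']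
    ring
  have hoeffding := cgf_le_of_mem_Icc aemeasurable_id mem_Icc 1
  rw [cgf_eq, mean_eq, mul_one, max_sub_min_eq_abs, sq_abs, ← logit_sub] at hoeffding
  linarith

lemma alphaCorr_mem_Ioo (a : ℝ) {u : ℝ} (hu : u ∈ Ioo 0 1) : alphaCorr a u ∈ Ioo 0 1 := by
  have hp : 0 < u ^ a := Real.rpow_pos_of_pos hu.1 a
  have hq : 0 < (1 - u) ^ a := Real.rpow_pos_of_pos (sub_pos.2 hu.2) a
  exact ⟨by rw [alphaCorr]; positivity, (div_lt_one (by positivity)).2 (lt_add_of_pos_right _ hq)⟩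

lemma logit_alphaCorr_s8 (a : ℝ) {u : ℝ} (hu : u ∈ Ioo 0 1) :
    logit (alphaCorr a u) = a * logit u := by
  have hu₁ : 0 < 1 - u := sub_pos.2 hu.2
  have denom_pos : 0 < u ^ a + (1 - u) ^ a :=
    add_pos (Real.rpow_pos_of_pos hu.1 a) (Real.rpow_pos_of_pos hu₁ a)
  have odds_eq : alphaCorr a u / (1 - alphaCorr a u) = (u / (1 - u)) ^ a := by
    rw [Real.div_rpow hu.1.le hu₁.le, alphaCorr, one_sub_div denom_pos.ne', add_sub_cancel_left,
      div_div_div_cancel_right₀ denom_pos.ne']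
  rw [logit, odds_eq, Real.log_rpow (div_pos hu.1 hu₁), logit]

lemma bernKL_alphaCorr_le_s8 (a : ℝ) {u : ℝ} (hu : u ∈ Ioo 0 1) :
    bernKL u (alphaCorr a u) ≤ (logit u * (1 - a)) ^ 2 / 8 := by
  have h := bernKL_le_sq_logit_sub_logit hu (alphaCorr_mem_Ioo a hu)
  rwa [logit_alphaCorr_s8 a hu, ← one_sub_mul, mul_comm] at h

section Integral

variable {X : Type*} [MeasurableSpace X] {μ : Measure X} {ρ α : X → ℝ}

lemma integral_sq_le_sq_of_ae_abs_le [IsProbabilityMeasure μ] {f : X → ℝ} {C : ℝ}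
    (hf : ∀ᵐ x ∂μ, |f x| ≤ C) : ∫ x, f x ^ 2 ∂μ ≤ C ^ 2 := by
  have h := integral_mono_of_nonneg (ae_of_all μ fun x ↦ sq_nonneg (f x))
    (integrable_const (C ^ 2)) (hf.mono fun x hx ↦ sq_le_sq' (abs_le.1 hx).1 (abs_le.1 hx).2)
  simpa using h

lemma aemeasurable_bernKL_alphaCorr (hρm : AEMeasurable ρ μ) (hαm : AEMeasurable α μ) :
    AEMeasurable (fun x ↦ bernKL (ρ x) (alphaCorr (α x) (ρ x))) μ := by
  unfold bernKL alphaCorr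
  fun_prop

lemma integrable_bernKL_alphaCorr (hρm : AEMeasurable ρ μ) (hρ : ∀ᵐ x ∂μ, ρ x ∈ Ioo 0 1)
    (hαm : AEMeasurable α μ) (hL2 : MemLp (fun x ↦ logit (ρ x) * (1 - α x)) 2 μ) :
    Integrable (fun x ↦ bernKL (ρ x) (alphaCorr (α x) (ρ x))) μ := by
  refine (hL2.integrable_sq.div_const 8).mono'
    (aemeasurable_bernKL_alphaCorr hρm hαm).aestronglyMeasurable ?_
  filter_upwards [hρ] with x hx
  rw [Real.norm_of_nonneg (bernKL_nonneg (Ioo_subset_Icc_self hx) (alphaCorr_mem_Ioo _ hx))]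
  exact bernKL_alphaCorr_le_s8 _ hx

theorem integral_bernKL_alphaCorr_le_S2_general (hρm : AEMeasurable ρ μ)
    (hρ : ∀ᵐ x ∂μ, ρ x ∈ Ioo 0 1) (hαm : AEMeasurable α μ)
    (hL2 : MemLp (fun x ↦ logit (ρ x) * (1 - α x)) 2 μ) :
    ∫ x, bernKL (ρ x) (alphaCorr (α x) (ρ x)) ∂μ ≤
      (∫ x, (logit (ρ x) * (1 - α x)) ^ 2 ∂μ) / 8 := by
  rw [← integral_div]
  exact integral_mono_ae (integrable_bernKL_alphaCorr hρm hρ hαm hL2)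
    (hL2.integrable_sq.div_const 8) (hρ.mono fun x hx ↦ bernKL_alphaCorr_le_s8 (α x) hx)

end Integral

/-- Proximity bound under setting (S2): if `|logit(ρᵤ(x))·(1 − α(x))| ≤ 1` a.e., then the
expected KL divergence between `ρᵤ` and `ρ_f = T_{α(x)}(ρᵤ(x))` is at most `π²/24`. -/
theorem integral_bernKL_alphaCorr_le_S2 {X : Type*} [MeasurableSpace X]
    (μ : Measure X) [IsProbabilityMeasure μ]
    (ρu : X → ℝ) (hρum : Measurable ρu)
    (hρu : ∀ x, ρu x ∈ Set.Ioo (0 : ℝ) 1)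
    (α : X → ℝ) (hαm : Measurable α)
    (hS2 : ∀ᵐ x ∂μ, |logit (ρu x) * (1 - α x)| ≤ 1) :
    ∫ x, bernKL (ρu x) (alphaCorr (α x) (ρu x)) ∂μ ≤ Real.pi ^ 2 / 24 := by
  have hL2 : MemLp (fun x ↦ logit (ρu x) * (1 - α x)) 2 μ :=
    .of_bound (by unfold logit; fun_prop) 1 hS2
  exact (integral_bernKL_alphaCorr_le_S2_general hρum.aemeasurable (ae_of_all μ hρu)
    hαm.aemeasurable hL2).trans
      (by nlinarith [integral_sq_le_sq_of_ae_abs_le hS2, Real.pi_gt_three])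
end

section
/- (Entropy upper bound for conservative α-tree scoring.) Let μ be a probability measure on a measurable space X, let η̃ : X → [0,1] be measurable (the target posterior), let B > 0, and let ρ_u : X → ℝ be measurable with 1/(1+exp(B)) ≤ ρ_u(x) ≤ 1/(1+exp(−B)) for all x. Let A_1, …, A_n be a finite measurable partition of X with μ(A_i) > 0 for each i, and define the alignment edge e_i := (1/μ(A_i)) · ∫_{A_i} (2η̃(x) − 1)·logit(ρ_u(x))/B dμ(x); assume |e_i| < 1 for each i. Define α(x) := (1/B)·log((1+e_i)/(1−e_i)) for x ∈ A_i, and ρ_f(x) := T_{α(x)}(ρ_u(x)). Then ∫_X [ η̃(x)·(−log ρ_f(x)) + (1 − η̃(x))·(−log(1 − ρ_f(x))) ] dμ(x) ≤ Σ_{i=1}^n μ(A_i)·H((1 + e_i)/2). -/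
open MeasureTheory

/-- Binary Shannon entropy with natural logarithm (`0·log 0 = 0` by convention). -/
noncomputable def binEnt (q : ℝ) : ℝ := -q * Real.log q - (1 - q) * Real.log (1 - q)

/-!
In logit coordinates `u = sigmoid t` the correction `T_α` is multiplication by `α`, and the log loss
splits into an even part and a part linear in the label:
`logLoss p (sigmoid t) = log (2 cosh (t / 2)) - (2 p - 1) t / 2`.
On a leaf with edge `e`, put `s = logit ((1 + e) / 2)`, so that `α = s / B` and the corrected score
has logit `s c` with `c = logit ρᵤ / B ∈ [-1, 1]`. Monotonicity of `cosh` in `|t|` bounds the even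
part by its value at `s`; since `e` is the mean of `(2 η - 1) c` over the leaf, the linear part
integrates to its value for label and prediction both equal to `(1 + e) / 2`, where the log loss is
the entropy.
-/

section LogLoss

open Real Set

theorem log_sigmoid (t : ℝ) : log (sigmoid t) = t / 2 - log (2 * cosh (t / 2)) := by
  have h : 1 + exp (-t) = 2 * cosh (t / 2) * exp (-(t / 2)) := by
    rw [cosh_eq, mul_div_cancel₀ _ two_ne_zero, add_mul, ← exp_add, ← exp_add, add_neg_cancel,
      exp_zero, ← neg_add, add_halves]
  have hcosh : 2 * cosh (t / 2) ≠ 0 := mul_ne_zero two_ne_zero (cosh_pos _).ne'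
  rw [sigmoid_def, log_inv, h, log_mul hcosh (exp_ne_zero _), log_exp]
  ring

theorem logit_sigmoid (t : ℝ) : logit (sigmoid t) = t := by
  rw [logit, ← sigmoid_neg, log_div (sigmoid_pos _).ne' (sigmoid_pos _).ne', log_sigmoid,
    log_sigmoid, neg_div, cosh_neg]
  ring

theorem sigmoid_logit {u : ℝ} (hu : u ∈ Ioo 0 1) : sigmoid (logit u) = u := by
  obtain ⟨t, rfl⟩ := range_sigmoid.ge hu
  rw [logit_sigmoid]

theorem logit_one_add_div_two (e : ℝ) : logit ((1 + e) / 2) = log ((1 + e) / (1 - e)) := by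
  rw [logit, show 1 - (1 + e) / 2 = (1 - e) / 2 by ring, div_div_div_cancel_right₀ two_ne_zero]

theorem Icc_sigmoid_subset_Ioo (a b : ℝ) : Icc (sigmoid a) (sigmoid b) ⊆ Ioo 0 1 :=
  Icc_subset_Ioo (sigmoid_pos a) (sigmoid_lt_one b)

theorem Icc_sigmoid_neg_sigmoid (B : ℝ) :
    Icc (sigmoid (-B)) (sigmoid B) = Icc (1 / (1 + exp B)) (1 / (1 + exp (-B))) := by
  simp only [sigmoid_def, neg_neg, one_div]

theorem abs_logit_le {u B : ℝ} (hu : u ∈ Icc (sigmoid (-B)) (sigmoid B)) : |logit u| ≤ B := by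
  rw [← sigmoid_logit (Icc_sigmoid_subset_Ioo _ _ hu)] at hu
  exact abs_le.mpr ⟨sigmoid_le_iff.mp hu.1, sigmoid_le_iff.mp hu.2⟩

theorem measurable_logit : Measurable logit :=
  (measurable_id.div (measurable_id.const_sub 1)).log

theorem alphaCorr_sigmoid (α t : ℝ) : alphaCorr α (sigmoid t) = sigmoid (α * t) := by
  have hpos := rpow_pos_of_pos (sigmoid_pos t) α
  rw [alphaCorr, ← sigmoid_neg, ← sigmoid_mul_rexp_neg, mul_rpow (sigmoid_nonneg t) (exp_nonneg _),
    ← exp_mul, neg_mul, mul_comm t α, sigmoid_def (α * t)]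
  field_simp

theorem alphaCorr_eq_sigmoid_mul_logit (α : ℝ) {u : ℝ} (hu : u ∈ Ioo 0 1) :
    alphaCorr α u = sigmoid (α * logit u) := by
  rw [← alphaCorr_sigmoid, sigmoid_logit hu]

/-- The expected log loss (cross entropy) of predicting probability `q` for a binary label that is
positive with probability `p`. -/
noncomputable def logLoss (p q : ℝ) : ℝ := p * (-log q) + (1 - p) * (-log (1 - q))

theorem logLoss_self (p : ℝ) : logLoss p p = binEnt p := by
  rw [logLoss, binEnt]
  ring

theorem logLoss_nonneg {p q : ℝ} (hp : p ∈ Icc 0 1) (hq : q ∈ Icc 0 1) : 0 ≤ logLoss p q :=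
  add_nonneg (mul_nonneg hp.1 (neg_nonneg.mpr (log_nonpos hq.1 hq.2)))
    (mul_nonneg (sub_nonneg.mpr hp.2)
      (neg_nonneg.mpr (log_nonpos (sub_nonneg.mpr hq.2) (sub_le_self 1 hq.1))))

theorem logLoss_sigmoid (p t : ℝ) :
    logLoss p (sigmoid t) = log (2 * cosh (t / 2)) - (2 * p - 1) * (t / 2) := by
  rw [logLoss, ← sigmoid_neg, log_sigmoid, log_sigmoid, neg_div, cosh_neg]
  ring

theorem logLoss_sigmoid_mul_le (p s : ℝ) {c : ℝ} (hc : |c| ≤ 1) :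
    logLoss p (sigmoid (s * c)) ≤
      binEnt (sigmoid s) + s / 2 * ((2 * sigmoid s - 1) - (2 * p - 1) * c) := by
  have hcosh : cosh (s * c / 2) ≤ cosh (s / 2) := by
    rw [cosh_le_cosh, mul_div_right_comm, abs_mul]
    exact mul_le_of_le_one_right (abs_nonneg _) hc
  have hlog : log (2 * cosh (s * c / 2)) ≤ log (2 * cosh (s / 2)) := by
    have := cosh_pos (s * c / 2)
    gcongr
  rw [← logLoss_self, logLoss_sigmoid, logLoss_sigmoid]
  linear_combination hlog

theorem binEnt_eq_binEntropy (q : ℝ) : binEnt q = binEntropy q := by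
  rw [binEnt, binEntropy, log_inv, log_inv]
  ring

end LogLoss

section Integral

open Real Set

variable {X ι : Type*} [MeasurableSpace X] {μ : Measure X}

theorem integrable_log_two_mul_cosh [IsFiniteMeasure μ] {t : X → ℝ} {C : ℝ}
    (ht : AEStronglyMeasurable t μ) (htC : ∀ᵐ x ∂μ, |t x| ≤ C) :
    Integrable (fun x => log (2 * cosh (t x))) μ := by
  have hcont : Continuous fun y => log (2 * cosh y) :=
    (continuous_const.mul continuous_cosh).log
      fun y => mul_ne_zero two_ne_zero (cosh_pos y).ne'
  refine .of_bound (hcont.comp_aestronglyMeasurable ht) (log (2 * cosh C)) ?_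
  filter_upwards [htC] with x hx
  have hone : 1 ≤ cosh (t x) := one_le_cosh _
  have hle : cosh (t x) ≤ cosh C := cosh_le_cosh.mpr (hx.trans (le_abs_self C))
  rw [norm_of_nonneg (log_nonneg (by linarith))]
  gcongr

theorem integrable_two_mul_sub_one_mul [IsFiniteMeasure μ] {η t : X → ℝ} {C : ℝ}
    (hη : Integrable η μ) (ht : AEStronglyMeasurable t μ) (htC : ∀ᵐ x ∂μ, |t x| ≤ C) :
    Integrable (fun x => (2 * η x - 1) * t x) μ :=
  ((hη.const_mul 2).sub (integrable_const 1)).mul_bdd ht htC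

theorem integrable_logLoss_sigmoid [IsFiniteMeasure μ] {η t : X → ℝ} {C : ℝ}
    (hη : Integrable η μ) (ht : AEStronglyMeasurable t μ) (htC : ∀ᵐ x ∂μ, |t x| ≤ C) :
    Integrable (fun x => logLoss (η x) (sigmoid (t x))) μ := by
  have hhalf : AEStronglyMeasurable (fun x => t x / 2) μ := by fun_prop
  have hhalfC : ∀ᵐ x ∂μ, |t x / 2| ≤ C / 2 := by
    filter_upwards [htC] with x hx
    rw [abs_div, abs_two]
    gcongr
  simp only [logLoss_sigmoid]
  exact (integrable_log_two_mul_cosh hhalf hhalfC).sub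
    (integrable_two_mul_sub_one_mul hη hhalf hhalfC)

theorem integral_logLoss_sigmoid_mul_le [IsFiniteMeasure μ] {η c : X → ℝ} {s : ℝ}
    (hη : Integrable η μ) (hcm : AEStronglyMeasurable c μ) (hc : ∀ᵐ x ∂μ, |c x| ≤ 1)
    (hmean : ∫ x, (2 * η x - 1) * c x ∂μ = μ.real univ * (2 * sigmoid s - 1)) :
    ∫ x, logLoss (η x) (sigmoid (s * c x)) ∂μ ≤ μ.real univ * binEnt (sigmoid s) := by
  have hmargin := integrable_two_mul_sub_one_mul hη hcm hc
  have hdiff : Integrable (fun x => s / 2 * ((2 * sigmoid s - 1) - (2 * η x - 1) * c x)) μ :=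
    ((integrable_const _).sub hmargin).const_mul _
  have hsc : ∀ᵐ x ∂μ, |s * c x| ≤ |s| := by
    filter_upwards [hc] with x hx
    rw [abs_mul]
    exact mul_le_of_le_one_right (abs_nonneg s) hx
  calc ∫ x, logLoss (η x) (sigmoid (s * c x)) ∂μ
      ≤ ∫ x, (binEnt (sigmoid s) + s / 2 * ((2 * sigmoid s - 1) - (2 * η x - 1) * c x)) ∂μ := by
        refine integral_mono_ae (integrable_logLoss_sigmoid hη (hcm.const_mul s) hsc)
          ((integrable_const _).add hdiff) ?_
        filter_upwards [hc] with x hx using logLoss_sigmoid_mul_le (η x) s hx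
    _ = μ.real univ * binEnt (sigmoid s) := by
        rw [integral_add (integrable_const _) hdiff, integral_const_mul,
          integral_sub (integrable_const _) hmargin, hmean, integral_const, integral_const,
          smul_eq_mul, smul_eq_mul, sub_self, mul_zero, add_zero]

section AlphaCorr

variable {η ρ : X → ℝ} {B : ℝ}

theorem integrable_logLoss_alphaCorr [IsFiniteMeasure μ] (hη : Integrable η μ)
    (hρm : Measurable ρ) (hρ : ∀ x, ρ x ∈ Icc (sigmoid (-B)) (sigmoid B)) (α : ℝ) :
    Integrable (fun x => logLoss (η x) (alphaCorr α (ρ x))) μ := by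
  simp only [alphaCorr_eq_sigmoid_mul_logit α (Icc_sigmoid_subset_Ioo _ _ (hρ _))]
  refine integrable_logLoss_sigmoid (C := |α| * B) hη
    ((measurable_logit.comp hρm).const_mul α).aestronglyMeasurable (.of_forall fun x => ?_)
  rw [abs_mul]
  exact mul_le_mul_of_nonneg_left (abs_logit_le (hρ x)) (abs_nonneg α)

theorem integral_logLoss_alphaCorr_le [IsFiniteMeasure μ] (hη : Integrable η μ) (hB : 0 < B)
    (hρm : Measurable ρ) (hρ : ∀ x, ρ x ∈ Icc (sigmoid (-B)) (sigmoid B))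
    {q : ℝ} (hq : q ∈ Ioo 0 1)
    (hmean : ∫ x, (2 * η x - 1) * logit (ρ x) / B ∂μ = μ.real univ * (2 * q - 1)) :
    ∫ x, logLoss (η x) (alphaCorr (1 / B * logit q) (ρ x)) ∂μ ≤ μ.real univ * binEnt q := by
  have hcorr : ∀ x, alphaCorr (1 / B * logit q) (ρ x) = sigmoid (logit q * (logit (ρ x) / B)) :=
    fun x => by
      rw [alphaCorr_eq_sigmoid_mul_logit _ (Icc_sigmoid_subset_Ioo _ _ (hρ x))]
      congr 1
      ring
  have hbound : ∀ x, |logit (ρ x) / B| ≤ 1 := fun x => by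
    rw [abs_div, abs_of_pos hB]
    exact div_le_one_of_le₀ (abs_logit_le (hρ x)) hB.le
  simp only [mul_div_assoc] at hmean
  simp only [hcorr]
  rw [← sigmoid_logit hq] at hmean
  have hle := integral_logLoss_sigmoid_mul_le hη
    ((measurable_logit.comp hρm).div_const B).aestronglyMeasurable (.of_forall hbound) hmean
  rwa [sigmoid_logit hq] at hle

end AlphaCorr

variable [Countable ι] {A : ι → Set X}

theorem integrable_and_integral_le_tsum_of_iUnion_eq_univ (hAm : ∀ i, MeasurableSet (A i))
    (hdisj : Pairwise (Function.onFun Disjoint A)) (hcover : ⋃ i, A i = univ) {f : X → ℝ}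
    {b : ι → ℝ} (hf : ∀ x, 0 ≤ f x) (hfi : ∀ i, IntegrableOn f (A i) μ)
    (hfb : ∀ i, ∫ x in A i, f x ∂μ ≤ b i) (hb : Summable b) :
    Integrable f μ ∧ ∫ x, f x ∂μ ≤ ∑' i, b i := by
  have hnorm : Summable fun i => ∫ x in A i, ‖f x‖ ∂μ := by
    simp only [norm_of_nonneg (hf _)]
    exact hb.of_nonneg_of_le (fun i => integral_nonneg hf) hfb
  have hint := integrableOn_iUnion_of_summable_integral_norm hfi hnorm
  have hsum := hasSum_integral_iUnion hAm hdisj hint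
  rw [hcover, integrableOn_univ] at hint
  rw [hcover, setIntegral_univ] at hsum
  exact ⟨hint, hasSum_le hfb hsum hb.hasSum⟩

theorem summable_measureReal_of_disjoint [IsFiniteMeasure μ] (hAm : ∀ i, MeasurableSet (A i))
    (hdisj : Pairwise (Function.onFun Disjoint A)) : Summable fun i => μ.real (A i) := by
  simpa only [setIntegral_const, smul_eq_mul, mul_one] using
    (hasSum_integral_iUnion hAm hdisj (integrableOn_const (C := (1 : ℝ)))).summable

theorem summable_measureReal_mul_binEnt [IsFiniteMeasure μ] (hAm : ∀ i, MeasurableSet (A i))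
    (hdisj : Pairwise (Function.onFun Disjoint A)) {q : ι → ℝ} (hq : ∀ i, q i ∈ Icc 0 1) :
    Summable fun i => μ.real (A i) * binEnt (q i) := by
  simp only [binEnt_eq_binEntropy]
  refine ((summable_measureReal_of_disjoint (μ := μ) hAm hdisj).mul_right (log 2)).of_nonneg_of_le
    (fun i => mul_nonneg measureReal_nonneg (binEntropy_nonneg (hq i).1 (hq i).2)) fun i => ?_
  gcongr
  exact binEntropy_le_log_two

theorem log_loss_le_entropy_conservative_general [IsFiniteMeasure μ]
    {η : X → ℝ} (hηm : Measurable η) (hη : ∀ x, η x ∈ Icc 0 1) {B : ℝ} (hB : 0 < B)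
    {ρu : X → ℝ} (hρum : Measurable ρu) (hρu : ∀ x, ρu x ∈ Icc (sigmoid (-B)) (sigmoid B))
    (hAm : ∀ i, MeasurableSet (A i)) (hdisj : Pairwise (Function.onFun Disjoint A))
    (hcover : ⋃ i, A i = univ) {e : ι → ℝ}
    (he : ∀ i, ∫ x in A i, (2 * η x - 1) * logit (ρu x) / B ∂μ = μ.real (A i) * e i)
    (hee : ∀ i, |e i| < 1) {α : X → ℝ}
    (hα : ∀ i, ∀ x ∈ A i, α x = 1 / B * log ((1 + e i) / (1 - e i))) :
    Integrable (fun x => logLoss (η x) (alphaCorr (α x) (ρu x))) μ ∧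
      ∫ x, logLoss (η x) (alphaCorr (α x) (ρu x)) ∂μ ≤
        ∑' i, μ.real (A i) * binEnt ((1 + e i) / 2) := by
  have hηint : Integrable η μ := .of_mem_Icc 0 1 hηm.aemeasurable (.of_forall hη)
  have hq : ∀ i, (1 + e i) / 2 ∈ Ioo 0 1 := fun i => by
    obtain ⟨hneg, hpos⟩ := abs_lt.mp (hee i)
    constructor <;> linarith
  have hnonneg : ∀ x, 0 ≤ logLoss (η x) (alphaCorr (α x) (ρu x)) := fun x => by
    rw [alphaCorr_eq_sigmoid_mul_logit _ (Icc_sigmoid_subset_Ioo _ _ (hρu x))]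
    exact logLoss_nonneg (hη x) ⟨sigmoid_nonneg _, sigmoid_le_one _⟩
  have hleaf : ∀ i, EqOn (fun x => logLoss (η x) (alphaCorr (α x) (ρu x)))
      (fun x => logLoss (η x) (alphaCorr (1 / B * logit ((1 + e i) / 2)) (ρu x))) (A i) :=
    fun i x hx => by simp only [hα i x hx, logit_one_add_div_two]
  refine integrable_and_integral_le_tsum_of_iUnion_eq_univ hAm hdisj hcover hnonneg
    (fun i => ?_) (fun i => ?_)
    (summable_measureReal_mul_binEnt hAm hdisj fun i => Ioo_subset_Icc_self (hq i))
  · rw [integrableOn_congr_fun (hleaf i) (hAm i)]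
    exact integrable_logLoss_alphaCorr hηint.integrableOn hρum hρu _
  · have hmean := he i
    rw [show e i = 2 * ((1 + e i) / 2) - 1 by ring, ← measureReal_restrict_apply_univ] at hmean
    rw [setIntegral_congr_fun (hAm i) (hleaf i), ← measureReal_restrict_apply_univ]
    exact integral_logLoss_alphaCorr_le hηint.integrableOn hB hρum hρu (hq i) hmean

end Integral

/-- Entropy upper bound for conservative α-tree scoring: the log-loss risk of the wrapped
posterior `ρ_f = T_{α(x)}(ρᵤ(x))`, with `α` constant on each leaf `A i` equal to
`(1/B)·log((1+eᵢ)/(1−eᵢ))` where `eᵢ` is the alignment edge of the leaf, is at most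
the expected binary entropy `∑ᵢ μ(Aᵢ)·H((1+eᵢ)/2)`. -/
theorem log_loss_le_entropy_conservative {X : Type*} [MeasurableSpace X]
    (μ : Measure X) [IsProbabilityMeasure μ]
    (η : X → ℝ) (hηm : Measurable η) (hη : ∀ x, η x ∈ Set.Icc (0 : ℝ) 1)
    (B : ℝ) (hB : 0 < B)
    (ρu : X → ℝ) (hρum : Measurable ρu)
    (hρu : ∀ x, 1 / (1 + Real.exp B) ≤ ρu x ∧ ρu x ≤ 1 / (1 + Real.exp (-B)))
    (n : ℕ) (A : Fin n → Set X) (hAm : ∀ i, MeasurableSet (A i))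
    (hdisj : Pairwise (Function.onFun Disjoint A))
    (hcover : (⋃ i, A i) = Set.univ)
    (hApos : ∀ i, 0 < (μ (A i)).toReal)
    (e : Fin n → ℝ)
    (he : ∀ i, e i =
      ((μ (A i)).toReal)⁻¹ * ∫ x in A i, (2 * η x - 1) * logit (ρu x) / B ∂μ)
    (hee : ∀ i, |e i| < 1)
    (α : X → ℝ)
    (hα : ∀ i, ∀ x ∈ A i, α x = (1 / B) * Real.log ((1 + e i) / (1 - e i)))
    (ρf : X → ℝ) (hρf : ∀ x, ρf x = alphaCorr (α x) (ρu x)) :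
    ∫ x, (η x * (-Real.log (ρf x)) + (1 - η x) * (-Real.log (1 - ρf x))) ∂μ ≤
      ∑ i, (μ (A i)).toReal * binEnt ((1 + e i) / 2) := by
  simpa only [hρf, logLoss, tsum_fintype, Measure.real] using
    (log_loss_le_entropy_conservative_general hηm hη hB hρum
      (fun x => (Icc_sigmoid_neg_sigmoid B).ge (hρu x)) hAm hdisj hcover
      (fun i => by rw [he i, Measure.real, mul_inv_cancel_left₀ (hApos i).ne']) hee hα).2
end

section
/- Fix B > 0 and e⁺, e⁻ > 0, and define J(a) := log 2 − B·a·e⁺ + log((1 + exp(Ba))/2)·(e⁺ + e⁻) for a ∈ ℝ. Then for every a ∈ ℝ, J(a) ≥ log(2)·(1 + (e⁺ + e⁻)·(H(e⁺/(e⁺+e⁻))/log 2 − 1)), and equality holds at a* = (1/B)·log(e⁺/e⁻). -/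
/-!
With `q = e⁺ / (e⁺ + e⁻)` and `s = sigmoid (B * a)`, the objective exceeds the claimed minimum by
exactly `e⁺ + e⁻` times the Kullback–Leibler divergence `D(q ‖ s)`, the cross entropy of `q`
relative to `s` minus the entropy of `q`. This is nonnegative by Gibbs' inequality and vanishes
when `s = q`, that is, when `B * a = log (e⁺ / e⁻)`.
-/

open Real

/-- The cross entropy, in nats, of the Bernoulli law with parameter `q` relative to the one with
parameter `s`; it is the entropy `binEnt q` when `s = q`. -/
noncomputable def binCrossEnt (q s : ℝ) : ℝ := -q * log s - (1 - q) * log (1 - s)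

/-- The function `J` minimised in the theorem, with `ep` and `em` standing for `e⁺` and `e⁻`. -/
noncomputable def leafObjective (B ep em a : ℝ) : ℝ :=
  log 2 - B * a * ep + log ((1 + exp (B * a)) / 2) * (ep + em)

/-- The optimal value of `leafObjective B ep em`, with the entropy converted from nats to bits by
the division by `log 2`. -/
noncomputable def leafValue (ep em : ℝ) : ℝ :=
  log 2 * (1 + (ep + em) * (binEnt (ep / (ep + em)) / log 2 - 1))

lemma binCrossEnt_self (q : ℝ) : binCrossEnt q q = binEnt q := rfl

lemma neg_mul_log_le_neg_mul_log_add {p s : ℝ} (hp : 0 ≤ p) (hs : 0 < s) :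
    -p * log p ≤ -p * log s + (s - p) := by
  rcases hp.eq_or_lt with rfl | hp
  · simpa using hs.le
  · have hlog : log s - log p ≤ s / p - 1 := by
      simpa only [log_div hs.ne' hp.ne'] using log_le_sub_one_of_pos (div_pos hs hp)
    calc -p * log p = -p * log s + p * (log s - log p) := by ring
      _ ≤ -p * log s + p * (s / p - 1) := by gcongr
      _ = -p * log s + (s - p) := by field_simp

lemma binEnt_le_binCrossEnt {q s : ℝ} (hq₀ : 0 ≤ q) (hq₁ : q ≤ 1) (hs₀ : 0 < s) (hs₁ : s < 1) :
    binEnt q ≤ binCrossEnt q s := by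
  have hsuccess := neg_mul_log_le_neg_mul_log_add hq₀ hs₀
  have hfailure := neg_mul_log_le_neg_mul_log_add (sub_nonneg.2 hq₁) (sub_pos.2 hs₁)
  unfold binEnt binCrossEnt
  linarith

lemma log_one_sub_sigmoid (x : ℝ) : log (1 - sigmoid x) = -log (1 + exp x) := by
  rw [← sigmoid_neg, sigmoid_def, neg_neg, log_inv]

lemma log_sigmoid_s11 (x : ℝ) : log (sigmoid x) = x - log (1 + exp x) := by
  have hodds : log (1 - sigmoid x) = log (sigmoid x) - x := by
    rw [← sigmoid_neg, ← sigmoid_mul_rexp_neg, log_mul (sigmoid_pos x).ne' (exp_ne_zero _),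
      log_exp, sub_eq_add_neg]
  linarith [log_one_sub_sigmoid x]

lemma sigmoid_log_div {p m : ℝ} (hp : 0 < p) (hm : 0 < m) :
    sigmoid (log (p / m)) = p / (p + m) := by
  rw [sigmoid_def, ← log_inv, exp_log (by positivity)]
  field_simp

lemma binCrossEnt_sigmoid (q x : ℝ) : binCrossEnt q (sigmoid x) = log (1 + exp x) - q * x := by
  rw [binCrossEnt, log_sigmoid_s11, log_one_sub_sigmoid]
  ring

lemma leafObjective_eq_leafValue_add {ep em : ℝ} (hep : 0 ≤ ep) (hem : 0 ≤ em) (B a : ℝ) :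
    leafObjective B ep em a = leafValue ep em +
      (ep + em) * (binCrossEnt (ep / (ep + em)) (sigmoid (B * a)) - binEnt (ep / (ep + em))) := by
  have hfrac : (ep + em) * (ep / (ep + em)) = ep :=
    mul_div_cancel_of_imp' fun hsum ↦ by linarith
  have hnats : log 2 * (binEnt (ep / (ep + em)) / log 2) = binEnt (ep / (ep + em)) :=
    mul_div_cancel₀ _ (log_pos one_lt_two).ne'
  rw [leafObjective, leafValue, binCrossEnt_sigmoid, log_div (by positivity) two_ne_zero]
  linear_combination B * a * hfrac - (ep + em) * hnats

lemma leafValue_le_leafObjective {ep em : ℝ} (hep : 0 ≤ ep) (hem : 0 ≤ em) (B a : ℝ) :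
    leafValue ep em ≤ leafObjective B ep em a := by
  have hsum : 0 ≤ ep + em := add_nonneg hep hem
  have hgibbs : binEnt (ep / (ep + em)) ≤ binCrossEnt (ep / (ep + em)) (sigmoid (B * a)) :=
    binEnt_le_binCrossEnt (div_nonneg hep hsum)
      (div_le_one_of_le₀ (le_add_of_nonneg_right hem) hsum) (sigmoid_pos _) (sigmoid_lt_one _)
  rw [leafObjective_eq_leafValue_add hep hem]
  exact le_add_of_nonneg_right (mul_nonneg hsum (sub_nonneg.2 hgibbs))

lemma leafObjective_one_div_mul_log_div {B ep em : ℝ} (hB : B ≠ 0) (hep : 0 < ep) (hem : 0 < em) :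
    leafObjective B ep em (1 / B * log (ep / em)) = leafValue ep em := by
  have hlogit : B * (1 / B * log (ep / em)) = log (ep / em) := by field_simp
  rw [leafObjective_eq_leafValue_add hep.le hem.le, hlogit, sigmoid_log_div hep hem,
    binCrossEnt_self, sub_self, mul_zero, add_zero]

theorem audacious_leaf_value_opt_general (B ep em : ℝ) (hep : 0 ≤ ep) (hem : 0 ≤ em) :
    (∀ a : ℝ, leafValue ep em ≤ leafObjective B ep em a) ∧
    (B ≠ 0 → 0 < ep → 0 < em →
      leafObjective B ep em (1 / B * log (ep / em)) = leafValue ep em) :=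
  ⟨leafValue_le_leafObjective hep hem B, leafObjective_one_div_mul_log_div⟩

/-- For `B > 0` and `e⁺, e⁻ > 0`, the function
`J(a) = log 2 − Ba·e⁺ + log((1 + exp(Ba))/2)·(e⁺ + e⁻)` is bounded below by
`log 2·(1 + (e⁺+e⁻)·(H(e⁺/(e⁺+e⁻))/log 2 − 1))` and attains this value at
`a* = (1/B)·log(e⁺/e⁻)`. -/
theorem audacious_leaf_value_opt (B ep em : ℝ) (hB : 0 < B) (hep : 0 < ep) (hem : 0 < em) :
    (∀ a : ℝ,
      Real.log 2 * (1 + (ep + em) * (binEnt (ep / (ep + em)) / Real.log 2 - 1)) ≤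
        Real.log 2 - B * a * ep + Real.log ((1 + Real.exp (B * a)) / 2) * (ep + em)) ∧
    (Real.log 2 - B * ((1 / B) * Real.log (ep / em)) * ep
        + Real.log ((1 + Real.exp (B * ((1 / B) * Real.log (ep / em)))) / 2) * (ep + em)
      = Real.log 2 * (1 + (ep + em) * (binEnt (ep / (ep + em)) / Real.log 2 - 1))) :=
  have ⟨hle, heq⟩ := audacious_leaf_value_opt_general B ep em hep.le hem.le
  ⟨hle, heq hB.ne' hep hem⟩
end

section
/- For all reals e⁺ ≥ 0 and e⁻ ≥ 0 with 0 < e⁺ + e⁻ ≤ 1, one has log(2)·(1 + (e⁺ + e⁻)·(H(e⁺/(e⁺+e⁻))/log 2 − 1)) ≤ H((1 + e⁺ − e⁻)/2). That is, the per-leaf entropy bound obtained from audacious scoring is never worse than the binary entropy H((1+e)/2) of the alignment edge e = e⁺ − e⁻ used by conservative scoring. -/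
/-! With `t = e⁺ + e⁻` and `q = e⁺ / t`, the point `(1 + e⁺ - e⁻) / 2` is the mixture
`t q + (1 - t) / 2` of a `q`-coin with a fair coin, while the audacious bound is the corresponding
mixture `t H(q) + (1 - t) H(1/2)` of their entropies, so the inequality is concavity of `H`. -/

theorem binEnt_eq_binEntropy_s13 : binEnt = Real.binEntropy := by
  funext q
  simp only [binEnt, Real.binEntropy, Real.log_inv]
  ring

theorem binEnt_two_inv : binEnt 2⁻¹ = Real.log 2 := by
  rw [binEnt_eq_binEntropy_s13, Real.binEntropy_two_inv]

theorem concaveOn_binEnt : ConcaveOn ℝ (Set.Icc 0 1) binEnt :=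
  binEnt_eq_binEntropy_s13 ▸ Real.strictConcave_binEntropy.concaveOn

theorem mul_binEnt_add_mul_log_two_le {q t : ℝ} (hq : q ∈ Set.Icc 0 1) (ht₀ : 0 ≤ t)
    (ht₁ : t ≤ 1) :
    t * binEnt q + (1 - t) * Real.log 2 ≤ binEnt (t * q + (1 - t) * 2⁻¹) := by
  have half_mem : (2⁻¹ : ℝ) ∈ Set.Icc 0 1 := by norm_num
  simpa only [smul_eq_mul, binEnt_two_inv] using
    concaveOn_binEnt.2 hq half_mem ht₀ (sub_nonneg.2 ht₁) (add_sub_cancel t 1)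

/-- The per-leaf audacious entropy bound is never worse than the conservative one:
for `e⁺, e⁻ ≥ 0` with `0 < e⁺ + e⁻ ≤ 1`,
`log 2·(1 + (e⁺+e⁻)(H(e⁺/(e⁺+e⁻))/log 2 − 1)) ≤ H((1 + e⁺ − e⁻)/2)`. -/
theorem audacious_le_conservative_entropy (ep em : ℝ) (hep : 0 ≤ ep) (hem : 0 ≤ em)
    (hsum0 : 0 < ep + em) (hsum1 : ep + em ≤ 1) :
    Real.log 2 * (1 + (ep + em) * (binEnt (ep / (ep + em)) / Real.log 2 - 1)) ≤
      binEnt ((1 + ep - em) / 2) := by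
  have log_two_ne_zero : Real.log 2 ≠ 0 := (Real.log_pos one_lt_two).ne'
  have ratio_mem : ep / (ep + em) ∈ Set.Icc 0 1 :=
    ⟨div_nonneg hep hsum0.le, div_le_one_of_le₀ (le_add_of_nonneg_right hem) hsum0.le⟩
  calc
    Real.log 2 * (1 + (ep + em) * (binEnt (ep / (ep + em)) / Real.log 2 - 1))
      = (ep + em) * binEnt (ep / (ep + em)) + (1 - (ep + em)) * Real.log 2 := by
        linear_combination (ep + em) * mul_div_cancel₀ (binEnt (ep / (ep + em))) log_two_ne_zero
    _ ≤ binEnt ((ep + em) * (ep / (ep + em)) + (1 - (ep + em)) * 2⁻¹) :=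
        mul_binEnt_add_mul_log_two_le ratio_mem hsum0.le hsum1
    _ = binEnt ((1 + ep - em) / 2) := by
        rw [mul_div_cancel₀ ep hsum0.ne']
        ring_nf
end

section
/- Let (Ω, 𝒟) be a probability space, let Z : Ω → ℝ be measurable with |Z| ≤ 1, and let h : Ω → {−1, 1} be measurable. Set e_q := E[Z] with |e_q| < 1, τ := 𝒟(h = 1) with 0 < τ < 1, e_r := E[Z·1{h=1}]/τ, e_p := E[Z·1{h=−1}]/(1−τ), q := (1+e_q)/2, and δ := (e_r − e_p)/2. Then the following exact identity holds: E[(1 − e_q·Z)·Z·h]/(1 − e_q²) = τ(1−τ)·δ/(q(1−q)) + e_q·E[(1 − Z²)·h]/(4·q(1−q)). -/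
open MeasureTheory

/-!
Write `m = E[Z]`. Pointwise `(1 - m * Z) * Z = (Z - m) + m * (1 - Z ^ 2)`, so multiplying by `h` and
integrating gives `E[(1 - m * Z) * Z * h] = cov[Z, h] + m * E[(1 - Z ^ 2) * h]`. A sign-valued `h`
is `2 * 1_A - 1` with `A = {h = 1}`, whence `cov[Z, h] = 2 * cov[Z, 1_A] = 4 * τ * (1 - τ) * δ`.
Divide by `1 - m ^ 2 = 4 * q * (1 - q)`.
-/

section Covariance

open ProbabilityTheory
open scoped ENNReal

variable {Ω : Type*} [MeasurableSpace Ω] {μ : Measure Ω} {X Y Y' : Ω → ℝ}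

theorem covariance_congr_right (h : Y =ᵐ[μ] Y') : cov[X, Y; μ] = cov[X, Y'; μ] := by
  simp only [covariance, integral_congr_ae h]
  refine integral_congr_ae ?_
  filter_upwards [h] with ω hω
  rw [hω]

theorem ae_eq_two_mul_indicator_sub_one (hY : ∀ᵐ ω ∂μ, Y ω = 1 ∨ Y ω = -1) :
    Y =ᵐ[μ] fun ω ↦ 2 * {ω | Y ω = 1}.indicator 1 ω - 1 := by
  filter_upwards [hY] with ω hω
  rcases hω with h | h <;> norm_num [Set.indicator_apply, h]

theorem setOf_eq_neg_one_ae_eq_compl (hY : ∀ᵐ ω ∂μ, Y ω = 1 ∨ Y ω = -1) :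
    ({ω | Y ω = -1} : Set Ω) =ᵐ[μ] ({ω | Y ω = 1}ᶜ : Set Ω) := by
  refine Filter.eventuallyEq_set.2 ?_
  filter_upwards [hY] with ω hω
  rcases hω with h | h <;> norm_num [h]

theorem memLp_top_of_ae_eq_one_or_neg_one (hYm : AEMeasurable Y μ)
    (hY : ∀ᵐ ω ∂μ, Y ω = 1 ∨ Y ω = -1) : MemLp Y ∞ μ := by
  refine memLp_top_of_bound hYm.aestronglyMeasurable 1 ?_
  filter_upwards [hY] with ω hω
  rcases hω with h | h <;> simp [h]

variable [IsProbabilityMeasure μ]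

theorem covariance_eq_integral_sub_mul (hX : Integrable X μ) (hY : Integrable Y μ)
    (hXY : Integrable (fun ω ↦ X ω * Y ω) μ) :
    cov[X, Y; μ] = ∫ ω, (X ω - μ[X]) * Y ω ∂μ := by
  have h_centered : Integrable (fun ω ↦ X ω - μ[X]) μ := hX.sub (integrable_const _)
  have h_mean_zero : ∫ ω, X ω - μ[X] ∂μ = 0 := by
    simp [integral_sub hX (integrable_const _)]
  have h_centered_mul : Integrable (fun ω ↦ (X ω - μ[X]) * Y ω) μ := by
    simp only [sub_mul]
    exact hXY.sub (hY.const_mul _)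
  simp only [covariance, mul_sub]
  rw [integral_sub h_centered_mul (h_centered.mul_const _), integral_mul_const, h_mean_zero,
    zero_mul, sub_zero]

theorem covariance_indicator_one {s : Set Ω} (hs : NullMeasurableSet s μ) (hX : Integrable X μ) :
    cov[X, s.indicator 1; μ] =
      (1 - μ.real s) * ∫ ω in s, X ω ∂μ - μ.real s * ∫ ω in sᶜ, X ω ∂μ := by
  have h_mul (f : Ω → ℝ) : (fun ω ↦ f ω * s.indicator 1 ω) = s.indicator f := by
    ext ω
    by_cases hω : ω ∈ s <;> simp [hω]
  have h_one : Integrable (s.indicator (1 : Ω → ℝ)) μ := (integrable_const 1).indicator₀ hs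
  have h_mean : μ[X] = ∫ ω in s, X ω ∂μ + ∫ ω in sᶜ, X ω ∂μ := (integral_add_compl₀ hs hX).symm
  calc
    cov[X, s.indicator 1; μ] = ∫ ω, (X ω - μ[X]) * s.indicator 1 ω ∂μ :=
      covariance_eq_integral_sub_mul hX h_one (h_mul X ▸ hX.indicator₀ hs)
    _ = ∫ ω in s, X ω - μ[X] ∂μ := by rw [h_mul, integral_indicator₀ hs]
    _ = ∫ ω in s, X ω ∂μ - μ.real s * μ[X] := by
      rw [integral_sub hX.integrableOn (integrable_const _), setIntegral_const, smul_eq_mul]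
    _ = (1 - μ.real s) * ∫ ω in s, X ω ∂μ - μ.real s * ∫ ω in sᶜ, X ω ∂μ := by
      rw [h_mean]
      ring

theorem covariance_of_ae_eq_one_or_neg_one (hX : Integrable X μ) (hYm : AEMeasurable Y μ)
    (hY : ∀ᵐ ω ∂μ, Y ω = 1 ∨ Y ω = -1) :
    cov[X, Y; μ] =
      2 * ((1 - μ.real {ω | Y ω = 1}) * ∫ ω in {ω | Y ω = 1}, X ω ∂μ -
        μ.real {ω | Y ω = 1} * ∫ ω in {ω | Y ω = -1}, X ω ∂μ) := by
  have hs : NullMeasurableSet {ω | Y ω = 1} μ := hYm.nullMeasurable (measurableSet_singleton 1)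
  have h_one : Integrable ({ω | Y ω = 1}.indicator (1 : Ω → ℝ)) μ :=
    (integrable_const 1).indicator₀ hs
  rw [covariance_congr_right (ae_eq_two_mul_indicator_sub_one hY),
    covariance_sub_const_right (h_one.const_mul 2),
    covariance_const_mul_right, covariance_indicator_one hs hX,
    setIntegral_congr_set (setOf_eq_neg_one_ae_eq_compl hY)]

theorem integral_one_sub_mean_mul_mul_mul (hX : MemLp X 2 μ) (hY : MemLp Y ∞ μ) :
    ∫ ω, (1 - μ[X] * X ω) * X ω * Y ω ∂μ =
      cov[X, Y; μ] + μ[X] * ∫ ω, (1 - X ω ^ 2) * Y ω ∂μ := by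
  have hX_int : Integrable X μ := hX.integrable one_le_two
  have hY_int : Integrable Y μ := hY.integrable le_top
  have hXY : Integrable (fun ω ↦ X ω * Y ω) μ := hX_int.mul_of_top_left hY
  have h_centered_mul : Integrable (fun ω ↦ (X ω - μ[X]) * Y ω) μ :=
    (hX_int.sub (integrable_const _)).mul_of_top_left hY
  have h_defect_mul : Integrable (fun ω ↦ (1 - X ω ^ 2) * Y ω) μ :=
    ((integrable_const 1).sub hX.integrable_sq).mul_of_top_left hY
  rw [covariance_eq_integral_sub_mul hX_int hY_int hXY, ← integral_const_mul,
    ← integral_add h_centered_mul (h_defect_mul.const_mul _)]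
  congr 1 with ω
  ring

end Covariance

open ProbabilityTheory in
theorem balanced_edge_identity_general {Ω : Type*} [MeasurableSpace Ω]
    (D : Measure Ω) [IsProbabilityMeasure D]
    (Z h : Ω → ℝ) (hZ : MemLp Z 2 D) (hhm : AEMeasurable h D)
    (hh : ∀ᵐ ω ∂D, h ω = 1 ∨ h ω = -1)
    (eq τ er ep q δ : ℝ)
    (heq : eq = ∫ ω, Z ω ∂D) (heq1 : eq ^ 2 ≠ 1)
    (hτ : τ = (D {ω | h ω = 1}).toReal) (hτ0 : 0 < τ) (hτ1 : τ < 1)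
    (her : er = (∫ ω in {ω | h ω = 1}, Z ω ∂D) / τ)
    (hep : ep = (∫ ω in {ω | h ω = -1}, Z ω ∂D) / (1 - τ))
    (hq : q = (1 + eq) / 2) (hδ : δ = (er - ep) / 2) :
    (∫ ω, (1 - eq * Z ω) * Z ω * h ω ∂D) / (1 - eq ^ 2) =
      τ * (1 - τ) * δ / (q * (1 - q)) +
        eq * (∫ ω, (1 - Z ω ^ 2) * h ω ∂D) / (4 * (q * (1 - q))) := by
  have h_num : ∫ ω, (1 - eq * Z ω) * Z ω * h ω ∂D =
      cov[Z, h; D] + eq * ∫ ω, (1 - Z ω ^ 2) * h ω ∂D :=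
    heq ▸ integral_one_sub_mean_mul_mul_mul hZ (memLp_top_of_ae_eq_one_or_neg_one hhm hh)
  have h_cov : cov[Z, h; D] = 4 * (τ * (1 - τ) * δ) := by
    have hτ' : D.real {ω | h ω = 1} = τ := hτ.symm
    have h_one_sub : 1 - τ ≠ 0 := (sub_pos.2 hτ1).ne'
    rw [covariance_of_ae_eq_one_or_neg_one (hZ.integrable one_le_two) hhm hh, hτ', hδ, her, hep]
    field_simp
    ring
  have h_den : q * (1 - q) = (1 - eq ^ 2) / 4 := by rw [hq]; ring
  have h_den_ne : 1 - eq ^ 2 ≠ 0 := sub_ne_zero.2 heq1.symm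
  rw [h_num, h_cov, h_den]
  field_simp

/-- Exact identity for the balanced edge of a split: with `e_q = E[Z]`, `τ = 𝒟(h = 1)`,
`e_r`, `e_p` the conditional edges of the two children, `q = (1+e_q)/2` and
`δ = (e_r − e_p)/2`, one has
`E[(1 − e_q Z)·Z·h]/(1 − e_q²) = τ(1−τ)δ/(q(1−q)) + e_q·E[(1 − Z²)·h]/(4q(1−q))`. -/
theorem balanced_edge_identity {Ω : Type*} [MeasurableSpace Ω]
    (D : Measure Ω) [IsProbabilityMeasure D]
    (Z h : Ω → ℝ) (hZm : Measurable Z) (hhm : Measurable h)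
    (hZ : ∀ ω, |Z ω| ≤ 1) (hh : ∀ ω, h ω = 1 ∨ h ω = -1)
    (eq τ er ep q δ : ℝ)
    (heq : eq = ∫ ω, Z ω ∂D) (heq1 : |eq| < 1)
    (hτ : τ = (D {ω | h ω = 1}).toReal) (hτ0 : 0 < τ) (hτ1 : τ < 1)
    (her : er = (∫ ω in {ω | h ω = 1}, Z ω ∂D) / τ)
    (hep : ep = (∫ ω in {ω | h ω = -1}, Z ω ∂D) / (1 - τ))
    (hq : q = (1 + eq) / 2) (hδ : δ = (er - ep) / 2) :
    (∫ ω, (1 - eq * Z ω) * Z ω * h ω ∂D) / (1 - eq ^ 2) =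
      τ * (1 - τ) * δ / (q * (1 - q)) +
        eq * (∫ ω, (1 - Z ω ^ 2) * h ω ∂D) / (4 * (q * (1 - q))) := by
  exact balanced_edge_identity_general D Z h
    (.of_bound hZm.aestronglyMeasurable 1 (.of_forall hZ)) hhm.aemeasurable (.of_forall hh)
    eq τ er ep q δ heq ((sq_lt_one_iff_abs_lt_one eq).2 heq1).ne hτ hτ0 hτ1 her hep hq hδ
end

section
/- (Weak Hypothesis Assumption implies the boosting split condition.) Let (Ω, 𝒟) be a probability space, let Z : Ω → ℝ be measurable with |Z| ≤ 1, and let h : Ω → {−1, 1} be measurable. Set e_q := E[Z] with |e_q| < 1, τ := 𝒟(h = 1) with 0 < τ < 1, e_r := E[Z·1{h=1}]/τ, e_p := E[Z·1{h=−1}]/(1−τ), q := (1+e_q)/2, and δ := (e_r − e_p)/2. Suppose for some γ > 0 that (i) E[(1 − e_q·Z)·Z·h]/(1 − e_q²) ≥ γ, and (ii) e_q·E[(1 − Z²)·h] ≤ 0. Then τ(1−τ)·δ ≥ γ·q·(1−q). -/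
open MeasureTheory

/-!
Since `(1 - eZ)Z = (Z - e) + e(1 - Z²)`, the balanced edge of the split `h`, multiplied by
`1 - e²`, is `cov(Z, h) + e·E[(1 - Z²)h]`, and condition (ii) says that the second summand is
at most `0`. For a `±1`-valued `h` the covariance only sees the two leaf averages of `Z`: it is
`2τ(1 - τ)` times their difference, that is `4τ(1 - τ)δ`. It remains to note `1 - e² = 4q(1 - q)`.
-/

open ProbabilityTheory Filter
open scoped ENNReal

section SignValued

variable {Ω : Type*} [MeasurableSpace Ω] {μ : Measure Ω} {h : Ω → ℝ}

lemma ae_eq_compl_of_sign (hh : ∀ᵐ ω ∂μ, h ω = 1 ∨ h ω = -1) :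
    ({ω | h ω = -1} : Set Ω) =ᵐ[μ] ({ω | h ω = 1}ᶜ : Set Ω) := by
  refine eventuallyEq_set.2 (hh.mono fun ω hω ↦ ?_)
  rcases hω with hω | hω <;> norm_num [Set.mem_compl_iff, Set.mem_ofPred_eq, hω]

lemma memLp_top_of_sign (hm : AEMeasurable h μ) (hh : ∀ᵐ ω ∂μ, h ω = 1 ∨ h ω = -1) :
    MemLp h ∞ μ := by
  refine memLp_top_of_bound hm.aestronglyMeasurable 1 (hh.mono fun ω hω ↦ ?_)
  rcases hω with hω | hω <;> simp [hω]

lemma integral_eq_add_of_sign {E : Type*} [NormedAddCommGroup E] [NormedSpace ℝ E] {f : Ω → E}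
    (hm : AEMeasurable h μ) (hh : ∀ᵐ ω ∂μ, h ω = 1 ∨ h ω = -1) (hf : Integrable f μ) :
    ∫ ω, f ω ∂μ = ∫ ω in {ω | h ω = 1}, f ω ∂μ + ∫ ω in {ω | h ω = -1}, f ω ∂μ := by
  have hs : NullMeasurableSet {ω | h ω = 1} μ :=
    hm.nullMeasurableSet_preimage (measurableSet_singleton 1)
  rw [setIntegral_congr_set (ae_eq_compl_of_sign hh), integral_add_compl₀ hs hf]

lemma integral_mul_sign {f : Ω → ℝ} (hm : AEMeasurable h μ)
    (hh : ∀ᵐ ω ∂μ, h ω = 1 ∨ h ω = -1) (hf : Integrable f μ) :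
    ∫ ω, f ω * h ω ∂μ = ∫ ω in {ω | h ω = 1}, f ω ∂μ - ∫ ω in {ω | h ω = -1}, f ω ∂μ := by
  have setIntegral_mul (c : ℝ) :
      ∫ ω in {ω | h ω = c}, f ω * h ω ∂μ = (∫ ω in {ω | h ω = c}, f ω ∂μ) * c := by
    have hs : NullMeasurableSet {ω | h ω = c} μ :=
      hm.nullMeasurableSet_preimage (measurableSet_singleton c)
    rw [← integral_mul_const]
    exact integral_congr_ae ((ae_restrict_mem₀ hs).mono fun ω hω ↦ congrArg (f ω * ·) hω)
  have hfh : Integrable (fun ω ↦ f ω * h ω) μ := hf.mul_of_top_left (memLp_top_of_sign hm hh)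
  rw [integral_eq_add_of_sign hm hh hfh, setIntegral_mul, setIntegral_mul]
  ring

lemma covariance_sign_right [IsProbabilityMeasure μ] {Z : Ω → ℝ} (hZ : MemLp Z 2 μ)
    (hm : AEMeasurable h μ) (hh : ∀ᵐ ω ∂μ, h ω = 1 ∨ h ω = -1) :
    cov[Z, h; μ] = 2 * μ.real {ω | h ω = 1} * μ.real {ω | h ω = -1} *
      (⨍ ω in {ω | h ω = 1}, Z ω ∂μ - ⨍ ω in {ω | h ω = -1}, Z ω ∂μ) := by
  have hZ1 : Integrable Z μ := hZ.integrable one_le_two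
  have setIntegral_Z (s : Set Ω) : ∫ ω in s, Z ω ∂μ = μ.real s * ⨍ ω in s, Z ω ∂μ :=
    (measure_smul_setAverage Z (measure_ne_top μ s)).symm
  have mean_Z := integral_eq_add_of_sign hm hh hZ1
  have mean_Zh := integral_mul_sign hm hh hZ1
  have mean_h : ∫ ω, h ω ∂μ = μ.real {ω | h ω = 1} - μ.real {ω | h ω = -1} := by
    simpa using integral_mul_sign hm hh (integrable_const (1 : ℝ))
  have total : 1 = μ.real {ω | h ω = 1} + μ.real {ω | h ω = -1} := by
    simpa using integral_eq_add_of_sign hm hh (integrable_const (1 : ℝ))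
  rw [covariance_eq_sub hZ ((memLp_top_of_sign hm hh).mono_exponent le_top)]
  simp only [Pi.mul_apply]
  rw [mean_Zh, mean_h, mean_Z, setIntegral_Z, setIntegral_Z, eq_sub_of_add_eq' total.symm]
  ring

end SignValued

lemma integral_balanced_edge {Ω : Type*} [MeasurableSpace Ω] {μ : Measure Ω}
    [IsProbabilityMeasure μ] {Z h : Ω → ℝ} (hZ : MemLp Z 2 μ) (hh : MemLp h ∞ μ) :
    ∫ ω, (1 - μ[Z] * Z ω) * Z ω * h ω ∂μ =
      cov[Z, h; μ] + μ[Z] * ∫ ω, (1 - Z ω ^ 2) * h ω ∂μ := by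
  have hh2 : MemLp h 2 μ := hh.mono_exponent le_top
  have hZh : Integrable (fun ω ↦ Z ω * h ω) μ := hZ.integrable_mul hh2
  have hmean : Integrable (fun ω ↦ μ[Z] * h ω) μ := (hh2.integrable one_le_two).const_mul _
  have hcov : Integrable (fun ω ↦ Z ω * h ω - μ[Z] * h ω) μ := hZh.sub hmean
  have hresidual : Integrable (fun ω ↦ μ[Z] * ((1 - Z ω ^ 2) * h ω)) μ :=
    (((integrable_const 1).sub hZ.integrable_sq).mul_of_top_left hh).const_mul _
  calc ∫ ω, (1 - μ[Z] * Z ω) * Z ω * h ω ∂μ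
      = ∫ ω, (Z ω * h ω - μ[Z] * h ω) + μ[Z] * ((1 - Z ω ^ 2) * h ω) ∂μ := by
        congr with ω
        ring
    _ = (∫ ω, Z ω * h ω ∂μ - μ[Z] * μ[h]) + μ[Z] * ∫ ω, (1 - Z ω ^ 2) * h ω ∂μ := by
        rw [integral_add hcov hresidual, integral_sub hZh hmean, integral_const_mul,
          integral_const_mul]
    _ = cov[Z, h; μ] + μ[Z] * ∫ ω, (1 - Z ω ^ 2) * h ω ∂μ := by
        rw [covariance_eq_sub hZ hh2]
        rfl

theorem wha_implies_split_condition_general {Ω : Type*} [MeasurableSpace Ω]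
    (D : Measure Ω) [IsProbabilityMeasure D]
    (Z h : Ω → ℝ) (hZ : MemLp Z 2 D) (hhm : AEMeasurable h D)
    (hh : ∀ᵐ ω ∂D, h ω = 1 ∨ h ω = -1)
    (eq τ er ep q δ γ : ℝ)
    (heq : eq = ∫ ω, Z ω ∂D) (heq1 : |eq| < 1)
    (hτ : τ = (D {ω | h ω = 1}).toReal)
    (her : er = (∫ ω in {ω | h ω = 1}, Z ω ∂D) / τ)
    (hep : ep = (∫ ω in {ω | h ω = -1}, Z ω ∂D) / (1 - τ))
    (hq : q = (1 + eq) / 2) (hδ : δ = (er - ep) / 2)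
    (hi : γ ≤ (∫ ω, (1 - eq * Z ω) * Z ω * h ω ∂D) / (1 - eq ^ 2))
    (hii : eq * ∫ ω, (1 - Z ω ^ 2) * h ω ∂D ≤ 0) :
    γ * (q * (1 - q)) ≤ τ * (1 - τ) * δ := by
  have hτ' : D.real {ω | h ω = -1} = 1 - τ := by
    rw [measureReal_congr (ae_eq_compl_of_sign hh), hτ]
    exact probReal_compl_eq_one_sub₀ (hhm.nullMeasurableSet_preimage (measurableSet_singleton 1))
  have cov_eq : cov[Z, h; D] = 4 * (τ * (1 - τ) * δ) := by
    rw [covariance_sign_right hZ hhm hh, setAverage_eq, setAverage_eq, hτ', measureReal_def, ← hτ,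
      hδ, her, hep]
    simp only [smul_eq_mul]
    ring
  have edge_le : γ * (1 - eq ^ 2) ≤ cov[Z, h; D] := by
    rw [le_div_iff₀ (sub_pos.2 ((sq_lt_one_iff_abs_lt_one eq).2 heq1)), heq,
      integral_balanced_edge hZ (memLp_top_of_sign hhm hh), ← heq] at hi
    linarith
  have hq4 : 1 - eq ^ 2 = 4 * (q * (1 - q)) := by rw [hq]; ring
  rw [hq4, cov_eq] at edge_le
  linarith

/-- The Weak Hypothesis Assumption implies the boosting split condition: if the split `h`
has balanced edge at least `γ` (condition (i)) and `e_q·E[(1 − Z²)·h] ≤ 0`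
(condition (ii)), then `τ(1−τ)·δ ≥ γ·q(1−q)`. -/
theorem wha_implies_split_condition {Ω : Type*} [MeasurableSpace Ω]
    (D : Measure Ω) [IsProbabilityMeasure D]
    (Z h : Ω → ℝ) (hZm : Measurable Z) (hhm : Measurable h)
    (hZ : ∀ ω, |Z ω| ≤ 1) (hh : ∀ ω, h ω = 1 ∨ h ω = -1)
    (eq τ er ep q δ γ : ℝ) (hγ : 0 < γ)
    (heq : eq = ∫ ω, Z ω ∂D) (heq1 : |eq| < 1)
    (hτ : τ = (D {ω | h ω = 1}).toReal) (hτ0 : 0 < τ) (hτ1 : τ < 1)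
    (her : er = (∫ ω in {ω | h ω = 1}, Z ω ∂D) / τ)
    (hep : ep = (∫ ω in {ω | h ω = -1}, Z ω ∂D) / (1 - τ))
    (hq : q = (1 + eq) / 2) (hδ : δ = (er - ep) / 2)
    (hi : γ ≤ (∫ ω, (1 - eq * Z ω) * Z ω * h ω ∂D) / (1 - eq ^ 2))
    (hii : eq * ∫ ω, (1 - Z ω ^ 2) * h ω ∂D ≤ 0) :
    γ * (q * (1 - q)) ≤ τ * (1 - τ) * δ := by
  exact wha_implies_split_condition_general D Z h
    (.of_bound hZm.aestronglyMeasurable 1 (.of_forall hZ)) hhm.aemeasurable (.of_forall hh)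
    eq τ er ep q δ γ heq heq1 hτ her hep hq hδ hi hii
end
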